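/- With the notation of the iterated integrals Ω at φ = π/4, one has Ω_{3,3,2,1} = (iπ³/6)·log 2 − (5/8)·iπ·ζ(3). -/

import Mathlib

noncomputable section

/-- `p₁ = e^{iπ/4}` -/
def p₁ : ℂ := Complex.exp (Complex.I * ((Real.pi : ℂ) / 4))
/-- `p₂ = -e^{-iπ/4}` -/
def p₂ : ℂ := -Complex.exp (-(Complex.I * ((Real.pi : ℂ) / 4)))
/-- `p₃ = -p₁` -/
def p₃ : ℂ := -p₁
/-- `p₄ = -p₂` -/
def p₄ : ℂ := -p₂

def F₁ (z : ℂ) : ℂ := 1 / (z - p₁) - 1 / (z - p₂) + 1 / (z - p₃) - 1 / (z - p₄)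

def F₂ (z : ℂ) : ℂ := 1 / (z - p₁) - 1 / (z - p₂) - 1 / (z - p₃) + 1 / (z - p₄)

def F₃ (z : ℂ) : ℂ := 1 / (z - p₁) + 1 / (z - p₂) - 1 / (z - p₃) - 1 / (z - p₄)

/-- Iterated integral along `[0, z]`:
`Omega [F_{i₁}, …, F_{iₙ}] z = Ω_{i₁,…,iₙ}(z)`, defined recursively by
`Ω_{i₁,…,i_k}(z) = ∫₀ᶻ Ω_{i₁,…,i_{k-1}}(t) · F_{i_k}(t) dt`, with `Ω_∅ ≡ 1`. -/
def Omega (fs : List (ℂ → ℂ)) : ℝ → ℂ :=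
  fs.foldl (fun g f => fun z => ∫ t in (0:ℝ)..z, g t * f (t : ℂ)) (fun _ => 1)

/-!
On `[0, 1]` the forms `F₁`, `F₂`, `F₃` pull back to rational forms in `w = t p₁`, so the innermost
and outermost letters of `Ω₃₃₂₁` integrate to logarithms and `Ω₃₃₂₁ = i Re ∫ f(w) dw` over the ray
from `0` to `p₁`, with `f` holomorphic on the sector `0 ≤ arg w ≤ π / 4` apart from a logarithmic
singularity at `1`. Cauchy's theorem replaces the ray by the real segment `[0, 1]` followed by the
unit arc from `1` to `p₁`. The real part of either piece is an integral of a product of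
logarithms, which after trigonometric substitutions is the real or imaginary part of an integral of
products of `log (1 ± z)` around the quarter disc. Power series on the arc turn these into
`∑ 1 / n ^ 3 = ζ(3)`, and besides it only powers of `π` and `log 2` survive.
-/

open MeasureTheory Filter Topology Set
open Complex (I exp)
open scoped Real ComplexConjugate

/-! ### Integrals with a prescribed value -/

/-- `f` is integrable on the interval from `a` to `b` with integral `S`. Carrying the integrability
along with the value rules out the junk value of non-integrable functions. -/
def HasIntervalIntegral {E : Type*} [NormedAddCommGroup E] [NormedSpace ℝ E]
    (f : ℝ → E) (a b : ℝ) (S : E) : Prop :=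
  IntervalIntegrable f volume a b ∧ ∫ x in a..b, f x = S

namespace HasIntervalIntegral

section NormedSpace

variable {E : Type*} [NormedAddCommGroup E] [NormedSpace ℝ E] {f g : ℝ → E} {a b c : ℝ} {S T : E}

lemma congr (hf : HasIntervalIntegral f a b S) (hab : a ≤ b) (hfg : ∀ x ∈ Ioo a b, f x = g x) :
    HasIntervalIntegral g a b S := by
  have hae : ∀ᵐ x : ℝ, x ∈ uIoc a b → f x = g x := by
    filter_upwards [Measure.ae_ne volume b] with x hxb hx
    rw [uIoc_of_le hab] at hx
    exact hfg x ⟨hx.1, hx.2.lt_of_ne hxb⟩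
  exact ⟨hf.1.congr_ae ((ae_restrict_iff' measurableSet_uIoc).2 hae),
    (intervalIntegral.integral_congr_ae hae).symm.trans hf.2⟩

lemma add (hf : HasIntervalIntegral f a b S) (hg : HasIntervalIntegral g a b T) :
    HasIntervalIntegral (fun x => f x + g x) a b (S + T) :=
  ⟨hf.1.add hg.1, by rw [intervalIntegral.integral_add hf.1 hg.1, hf.2, hg.2]⟩

lemma sub (hf : HasIntervalIntegral f a b S) (hg : HasIntervalIntegral g a b T) :
    HasIntervalIntegral (fun x => f x - g x) a b (S - T) :=
  ⟨hf.1.sub hg.1, by rw [intervalIntegral.integral_sub hf.1 hg.1, hf.2, hg.2]⟩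

lemma const (a b : ℝ) (e : E) [CompleteSpace E] :
    HasIntervalIntegral (fun _ => e) a b ((b - a) • e) :=
  ⟨intervalIntegrable_const, intervalIntegral.integral_const e⟩

lemma trans (h₁ : HasIntervalIntegral f a b S) (h₂ : HasIntervalIntegral f b c T) :
    HasIntervalIntegral f a c (S + T) :=
  ⟨h₁.1.trans h₂.1, by
    rw [← intervalIntegral.integral_add_adjacent_intervals h₁.1 h₂.1, h₁.2, h₂.2]⟩

lemma exists_split (hf : HasIntervalIntegral f a c S) (hb : b ∈ Icc a c) :
    ∃ T U, HasIntervalIntegral f a b T ∧ HasIntervalIntegral f b c U ∧ T + U = S := by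
  have hac : b ∈ uIcc a c := Icc_subset_uIcc hb
  have hab := hf.1.mono_set (uIcc_subset_uIcc_left hac)
  have hbc := hf.1.mono_set (uIcc_subset_uIcc_right hac)
  exact ⟨_, _, ⟨hab, rfl⟩, ⟨hbc, rfl⟩,
    (intervalIntegral.integral_add_adjacent_intervals hab hbc).trans hf.2⟩

lemma comp_neg_iff :
    HasIntervalIntegral (fun x => f (-x)) (-b) (-a) S ↔ HasIntervalIntegral f a b S := by
  rw [HasIntervalIntegral, HasIntervalIntegral, intervalIntegral.integral_comp_neg, neg_neg,
    neg_neg, ← IntervalIntegrable.iff_comp_neg]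
  exact and_congr_left' ⟨.symm, .symm⟩

lemma comp_strictMono_iff {φ φ' : ℝ → ℝ} (hab : a ≤ b) (hφ : ContinuousOn φ (Icc a b))
    (hφ' : ∀ x ∈ Ioo a b, HasDerivAt φ (φ' x) x) (hpos : ∀ x ∈ Ioo a b, 0 < φ' x) :
    HasIntervalIntegral f (φ a) (φ b) S ↔
      HasIntervalIntegral (fun x => φ' x • f (φ x)) a b S := by
  have hmono : StrictMonoOn φ (Icc a b) := by
    refine strictMonoOn_of_deriv_pos (convex_Icc a b) hφ fun x hx => ?_
    rw [interior_Icc] at hx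
    exact (hφ' x hx).deriv ▸ hpos x hx
  have himage : φ '' Ioo a b = Ioo (φ a) (φ b) := by
    refine Subset.antisymm ?_ (intermediate_value_Ioo hab hφ)
    rintro _ ⟨x, hx, rfl⟩
    have hxI := Ioo_subset_Icc_self hx
    exact ⟨hmono (left_mem_Icc.2 hab) hxI hx.1, hmono hxI (right_mem_Icc.2 hab) hx.2⟩
  have hle : φ a ≤ φ b := hmono.monotoneOn (left_mem_Icc.2 hab) (right_mem_Icc.2 hab) hab
  have hderiv : ∀ x ∈ Ioo a b, HasDerivWithinAt φ (φ' x) (Ioo a b) x :=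
    fun x hx => (hφ' x hx).hasDerivWithinAt
  have hinj : InjOn φ (Ioo a b) := (hmono.mono Ioo_subset_Icc_self).injOn
  have habs : EqOn (fun x => |φ' x| • f (φ x)) (fun x => φ' x • f (φ x)) (Ioo a b) :=
    fun x hx => by simp only [abs_of_pos (hpos x hx)]
  rw [HasIntervalIntegral, HasIntervalIntegral, intervalIntegrable_iff_integrableOn_Ioo_of_le hle,
    intervalIntegrable_iff_integrableOn_Ioo_of_le hab, intervalIntegral.integral_of_le hle,
    intervalIntegral.integral_of_le hab, integral_Ioc_eq_integral_Ioo,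
    integral_Ioc_eq_integral_Ioo, ← himage,
    integrableOn_image_iff_integrableOn_abs_deriv_smul measurableSet_Ioo hderiv hinj,
    integral_image_eq_integral_abs_deriv_smul measurableSet_Ioo hderiv hinj,
    integrableOn_congr_fun habs measurableSet_Ioo, setIntegral_congr_fun measurableSet_Ioo habs]

lemma comp_strictAnti_iff {φ φ' : ℝ → ℝ} (hab : a ≤ b) (hφ : ContinuousOn φ (Icc a b))
    (hφ' : ∀ x ∈ Ioo a b, HasDerivAt φ (-φ' x) x) (hpos : ∀ x ∈ Ioo a b, 0 < φ' x) :
    HasIntervalIntegral f (φ b) (φ a) S ↔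
      HasIntervalIntegral (fun x => φ' x • f (φ x)) a b S := by
  have h := comp_strictMono_iff (f := fun x => f (-x)) (S := S) (φ := fun x => -φ x) hab hφ.neg
    (fun x hx => (hφ' x hx).neg.congr_deriv (neg_neg _)) hpos
  simp only [neg_neg] at h
  rw [← h, comp_neg_iff]

end NormedSpace

lemma const_mul {𝕜 : Type*} [RCLike 𝕜] {f : ℝ → 𝕜} {a b : ℝ} {S : 𝕜} (c : 𝕜)
    (hf : HasIntervalIntegral f a b S) : HasIntervalIntegral (fun x => c * f x) a b (c * S) :=
  ⟨hf.1.const_mul c, by rw [intervalIntegral.integral_const_mul, hf.2]⟩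

section Complex

variable {f : ℝ → ℂ} {a b : ℝ} {S : ℂ}

lemma re (hf : HasIntervalIntegral f a b S) :
    HasIntervalIntegral (fun x => (f x).re) a b S.re :=
  ⟨⟨hf.1.1.re, hf.1.2.re⟩, by
    rw [← hf.2]; exact Complex.reCLM.intervalIntegral_comp_comm hf.1⟩

lemma im (hf : HasIntervalIntegral f a b S) :
    HasIntervalIntegral (fun x => (f x).im) a b S.im :=
  ⟨⟨hf.1.1.im, hf.1.2.im⟩, by
    rw [← hf.2]; exact Complex.imCLM.intervalIntegral_comp_comm hf.1⟩

end Complex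

end HasIntervalIntegral

/-! ### Holomorphic functions on a sector with a logarithmic singularity at `1` -/

lemma norm_ofReal_mul_exp_mul_I {ρ : ℝ} (hρ : 0 ≤ ρ) (θ : ℝ) : ‖ρ * exp (θ * I)‖ = ρ := by
  rw [norm_mul, Complex.norm_exp_ofReal_mul_I, mul_one, Complex.norm_real, Real.norm_of_nonneg hρ]

lemma abs_sin_le_norm_one_sub (ρ θ : ℝ) : |Real.sin θ| ≤ ‖1 - ρ * exp (θ * I)‖ := by
  have hrot : 1 - ρ * exp (θ * I) = exp (θ * I) * (exp ((-θ : ℝ) * I) - ρ) := by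
    rw [mul_sub, ← Complex.exp_add, Complex.ofReal_neg, neg_mul, add_neg_cancel, Complex.exp_zero,
      mul_comm (exp _)]
  have him : (exp ((-θ : ℝ) * I) - ρ).im = -Real.sin θ := by
    rw [Complex.sub_im, Complex.exp_ofReal_mul_I_im, Complex.ofReal_im, sub_zero, Real.sin_neg]
  rw [hrot, norm_mul, Complex.norm_exp_ofReal_mul_I, one_mul, ← abs_neg, ← him]
  exact Complex.abs_im_le_norm _

/-- The closed sector `{ρ e^{iθ} | 0 ≤ ρ ≤ 1, 0 ≤ θ ≤ b}` of the unit disc. -/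
def unitSector (b : ℝ) : Set ℂ :=
  (fun x : ℝ × ℝ => x.1 * exp (x.2 * I)) '' Icc 0 1 ×ˢ Icc 0 b

lemma mem_unitSector {b ρ θ : ℝ} (hρ : ρ ∈ Icc (0 : ℝ) 1) (hθ : θ ∈ Icc 0 b) :
    ρ * exp (θ * I) ∈ unitSector b :=
  ⟨(ρ, θ), ⟨hρ, hθ⟩, rfl⟩

lemma exp_mem_unitSector {b θ : ℝ} (hθ : θ ∈ Icc 0 b) : exp (θ * I) ∈ unitSector b := by
  simpa using mem_unitSector (right_mem_Icc.2 zero_le_one) hθ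

lemma isCompact_unitSector (b : ℝ) : IsCompact (unitSector b) :=
  (isCompact_Icc.prod isCompact_Icc).image (by fun_prop)

lemma norm_le_one_of_mem_unitSector {b : ℝ} {z : ℂ} (hz : z ∈ unitSector b) : ‖z‖ ≤ 1 := by
  obtain ⟨⟨ρ, θ⟩, ⟨hρ, -⟩, rfl⟩ := hz
  exact (norm_ofReal_mul_exp_mul_I hρ.1 θ).trans_le hρ.2

lemma one_sub_mem_slitPlane {z : ℂ} (hz : ‖z‖ ≤ 1) (hz1 : z ≠ 1) :
    1 - z ∈ Complex.slitPlane := by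
  by_contra hslit
  obtain ⟨hre, him⟩ : 1 ≤ z.re ∧ z.im = 0 := by simpa [Complex.mem_slitPlane_iff] using hslit
  exact hz1 (Complex.ext (le_antisymm ((Complex.re_le_norm z).trans hz) hre) him)

lemma norm_one_sub_le_two {z : ℂ} (hz : ‖z‖ ≤ 1) : ‖1 - z‖ ≤ 2 := by
  linarith [norm_sub_le 1 z, norm_one (α := ℂ)]

lemma one_le_two_rpow_mul_norm_one_sub_rpow_neg {z : ℂ} (hz : ‖z‖ ≤ 1) (hz1 : z ≠ 1) {ε : ℝ}
    (hε : 0 ≤ ε) : 1 ≤ 2 ^ ε * ‖1 - z‖ ^ (-ε) := by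
  have hpos : 0 < ‖1 - z‖ := norm_pos_iff.2 (sub_ne_zero.2 hz1.symm)
  rw [Real.rpow_neg hpos.le, ← div_eq_mul_inv, ← Real.div_rpow two_pos.le hpos.le]
  exact Real.one_le_rpow ((one_le_div hpos).2 (norm_one_sub_le_two hz)) hε

lemma abs_log_le_rpow_neg {x ε : ℝ} (hx : 0 < x) (hx2 : x ≤ 2) (hε : 0 < ε) :
    |Real.log x| ≤ 1 + x ^ (-ε) / ε := by
  have hinv := Real.log_le_rpow_div (inv_nonneg.2 hx.le) hε
  rw [Real.log_inv, Real.inv_rpow hx.le, ← Real.rpow_neg hx.le] at hinv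
  have hlog : Real.log x ≤ 1 := by linarith [Real.log_le_sub_one_of_pos hx]
  have hnonneg : 0 ≤ x ^ (-ε) / ε := by positivity
  exact abs_le.2 ⟨by linarith, by linarith⟩

/-- Holomorphic functions on the unit disc that extend continuously to the closed sector
`unitSector b` punctured at `1`, where they grow more slowly than any negative power of `‖1 - z‖`.
They form an algebra containing `log (1 - z)`. -/
structure IsLogTame (b : ℝ) (f : ℂ → ℂ) : Prop where
  differentiableOn : DifferentiableOn ℂ f (Metric.ball 0 1)
  continuousOn : ContinuousOn f (unitSector b \ {1})
  exists_bound : ∀ ε > (0 : ℝ), ∃ K : ℝ, ∀ z ∈ unitSector b \ {1}, ‖f z‖ ≤ K * ‖1 - z‖ ^ (-ε)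

namespace IsLogTame

variable {b : ℝ} {f g : ℂ → ℂ}

lemma of_continuousOn (hf : DifferentiableOn ℂ f (Metric.ball 0 1))
    (hf' : ContinuousOn f (unitSector b)) : IsLogTame b f := by
  refine ⟨hf, hf'.mono sdiff_subset, fun ε hε => ?_⟩
  obtain ⟨C, hC⟩ := (isCompact_unitSector b).exists_bound_of_continuousOn hf'
  refine ⟨C * 2 ^ ε, fun z hz => ?_⟩
  have hone := one_le_two_rpow_mul_norm_one_sub_rpow_neg (norm_le_one_of_mem_unitSector hz.1)
    hz.2 hε.le
  have hCz := hC z hz.1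
  calc ‖f z‖ ≤ C * 1 := by rwa [mul_one]
    _ ≤ C * (2 ^ ε * ‖1 - z‖ ^ (-ε)) := by gcongr; exact (norm_nonneg _).trans hCz
    _ = C * 2 ^ ε * ‖1 - z‖ ^ (-ε) := by ring

lemma const (b : ℝ) (c : ℂ) : IsLogTame b fun _ => c :=
  of_continuousOn (differentiableOn_const c) continuousOn_const

lemma id (b : ℝ) : IsLogTame b fun z => z := of_continuousOn differentiableOn_id continuousOn_id

lemma add (hf : IsLogTame b f) (hg : IsLogTame b g) : IsLogTame b fun z => f z + g z := by
  refine ⟨hf.differentiableOn.add hg.differentiableOn, hf.continuousOn.add hg.continuousOn,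
    fun ε hε => ?_⟩
  obtain ⟨K, hK⟩ := hf.exists_bound ε hε
  obtain ⟨L, hL⟩ := hg.exists_bound ε hε
  refine ⟨K + L, fun z hz => (norm_add_le _ _).trans ?_⟩
  rw [add_mul]
  exact add_le_add (hK z hz) (hL z hz)

lemma mul (hf : IsLogTame b f) (hg : IsLogTame b g) : IsLogTame b fun z => f z * g z := by
  refine ⟨hf.differentiableOn.mul hg.differentiableOn, hf.continuousOn.mul hg.continuousOn,
    fun ε hε => ?_⟩
  obtain ⟨K, hK⟩ := hf.exists_bound (ε / 2) (half_pos hε)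
  obtain ⟨L, hL⟩ := hg.exists_bound (ε / 2) (half_pos hε)
  refine ⟨K * L, fun z hz => ?_⟩
  have hpos : 0 < ‖1 - z‖ := norm_pos_iff.2 (sub_ne_zero.2 (Ne.symm hz.2))
  calc ‖f z * g z‖ = ‖f z‖ * ‖g z‖ := norm_mul _ _
    _ ≤ K * ‖1 - z‖ ^ (-(ε / 2)) * (L * ‖1 - z‖ ^ (-(ε / 2))) :=
        mul_le_mul (hK z hz) (hL z hz) (norm_nonneg _) ((norm_nonneg _).trans (hK z hz))
    _ = K * L * ‖1 - z‖ ^ (-(ε / 2) + -(ε / 2)) := by rw [Real.rpow_add hpos]; ring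
    _ = K * L * ‖1 - z‖ ^ (-ε) := by ring_nf

lemma pow (hf : IsLogTame b f) (n : ℕ) : IsLogTame b fun z => f z ^ n := by
  induction n with
  | zero => simpa using const b 1
  | succ n ih => simpa only [pow_succ] using ih.mul hf

lemma sub (hf : IsLogTame b f) (hg : IsLogTame b g) : IsLogTame b fun z => f z - g z := by
  simpa [sub_eq_add_neg] using hf.add ((const b (-1)).mul hg)

lemma log_one_sub (b : ℝ) : IsLogTame b fun z => Complex.log (1 - z) := by
  refine ⟨fun z hz => ?_, fun z hz => ?_, fun ε hε => ⟨(1 + π) * 2 ^ ε + ε⁻¹, fun z hz => ?_⟩⟩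
  · have hz : ‖z‖ < 1 := mem_ball_zero_iff.1 hz
    have hslit := one_sub_mem_slitPlane hz.le (by rintro rfl; simp at hz)
    exact (DifferentiableAt.clog (by fun_prop) hslit).differentiableWithinAt
  · have hslit := one_sub_mem_slitPlane (norm_le_one_of_mem_unitSector hz.1) hz.2
    exact (ContinuousAt.clog (by fun_prop) hslit).continuousWithinAt
  have hz1 := norm_le_one_of_mem_unitSector hz.1
  have hpos : 0 < ‖1 - z‖ := norm_pos_iff.2 (sub_ne_zero.2 (Ne.symm hz.2))
  have hone := one_le_two_rpow_mul_norm_one_sub_rpow_neg hz1 hz.2 hε.le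
  calc ‖Complex.log (1 - z)‖ ≤ |Real.log ‖1 - z‖| + |Complex.arg (1 - z)| := by
        simpa only [Complex.log_re, Complex.log_im] using
          Complex.norm_le_abs_re_add_abs_im (Complex.log (1 - z))
    _ ≤ 1 + ‖1 - z‖ ^ (-ε) / ε + π :=
        add_le_add (abs_log_le_rpow_neg hpos (norm_one_sub_le_two hz1) hε)
          (Complex.abs_arg_le_pi _)
    _ = (1 + π) * 1 + ε⁻¹ * ‖1 - z‖ ^ (-ε) := by ring
    _ ≤ (1 + π) * (2 ^ ε * ‖1 - z‖ ^ (-ε)) + ε⁻¹ * ‖1 - z‖ ^ (-ε) := by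
        gcongr
    _ = ((1 + π) * 2 ^ ε + ε⁻¹) * ‖1 - z‖ ^ (-ε) := by ring

lemma dslope_zero (hf : IsLogTame b f) : IsLogTame b (dslope f 0) := by
  have hd : DifferentiableOn ℂ (dslope f 0) (Metric.ball 0 1) :=
    (Complex.differentiableOn_dslope (Metric.ball_mem_nhds 0 one_pos)).2 hf.differentiableOn
  refine ⟨hd, fun z hz => ?_, fun ε hε => ?_⟩
  · rcases eq_or_ne z 0 with rfl | hz0
    · exact (hd.continuousOn.continuousAt (Metric.ball_mem_nhds 0 one_pos)).continuousWithinAt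
    · exact (continuousWithinAt_dslope_of_ne hz0).2 (hf.continuousOn z hz)
  obtain ⟨C, hC⟩ := (isCompact_closedBall (0 : ℂ) (1 / 2)).exists_bound_of_continuousOn
    (hd.continuousOn.mono (Metric.closedBall_subset_ball (by norm_num)))
  have hC0 : 0 ≤ C := (norm_nonneg _).trans (hC 0 (by simp))
  obtain ⟨K, hK⟩ := (hf.sub (const b (f 0))).exists_bound ε hε
  refine ⟨C * 2 ^ ε + 2 * K, fun z hz => ?_⟩
  have hone := one_le_two_rpow_mul_norm_one_sub_rpow_neg (norm_le_one_of_mem_unitSector hz.1)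
    hz.2 hε.le
  have hKz := hK z hz
  have hKz0 := (norm_nonneg _).trans hKz
  have hCz : C ≤ C * (2 ^ ε * ‖1 - z‖ ^ (-ε)) := le_mul_of_one_le_right hC0 hone
  rcases le_or_gt ‖z‖ (1 / 2) with hz2 | hz2
  · linarith [hC z (mem_closedBall_zero_iff.2 hz2)]
  · have hz0 : z ≠ 0 := norm_pos_iff.1 (by linarith)
    have hinv : ‖z‖⁻¹ ≤ 2 := by rw [inv_le_comm₀ (by linarith) two_pos]; linarith
    have hslope : ‖dslope f 0 z‖ ≤ 2 * (K * ‖1 - z‖ ^ (-ε)) := by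
      rw [dslope_of_ne _ hz0, slope_def_module, sub_zero, norm_smul, norm_inv]
      exact mul_le_mul hinv hKz (norm_nonneg _) two_pos.le
    linarith

lemma exists_bound_of_le_norm_one_sub (hf : IsLogTame b f) {ε : ℝ} (hε : 0 < ε) :
    ∃ K : ℝ, ∀ z ∈ unitSector b, ∀ d > 0, d ≤ ‖1 - z‖ → ‖f z‖ ≤ K * d ^ (-ε) := by
  obtain ⟨K, hK⟩ := hf.exists_bound ε hε
  refine ⟨K, fun z hz d hd hdz => ?_⟩
  have hpos : 0 < ‖1 - z‖ := hd.trans_le hdz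
  have hKz := hK z ⟨hz, (sub_ne_zero.1 (norm_pos_iff.1 hpos)).symm⟩
  have hK0 : 0 ≤ K :=
    nonneg_of_mul_nonneg_left ((norm_nonneg _).trans hKz) (Real.rpow_pos_of_pos hpos _)
  exact hKz.trans (mul_le_mul_of_nonneg_left
    (Real.rpow_le_rpow_of_nonpos hd hdz (neg_nonpos.2 hε.le)) hK0)

lemma exists_arc_bound (hf : IsLogTame b f) (hb : b ≤ π / 2) :
    ∃ K : ℝ, ∀ ρ ∈ Icc (0 : ℝ) 1, ∀ θ ∈ Ioc 0 b,
      ‖f (ρ * exp (θ * I))‖ ≤ K * θ ^ (-(1 / 2) : ℝ) := by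
  obtain ⟨K, hK⟩ := hf.exists_bound_of_le_norm_one_sub one_half_pos
  refine ⟨K * (2 / π) ^ (-(1 / 2) : ℝ), fun ρ hρ θ hθ => ?_⟩
  have hθle : 2 / π * θ ≤ ‖1 - ρ * exp (θ * I)‖ :=
    ((Real.mul_le_sin hθ.1.le (hθ.2.trans hb)).trans (le_abs_self _)).trans
      (abs_sin_le_norm_one_sub ρ θ)
  have hθpos : 0 < 2 / π * θ := mul_pos (by positivity) hθ.1
  rw [mul_assoc, ← Real.mul_rpow (by positivity) hθ.1.le]
  exact hK _ (mem_unitSector hρ (Ioc_subset_Icc_self hθ)) _ hθpos hθle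

lemma exists_ray_bound (hf : IsLogTame b f) :
    ∃ K : ℝ, ∀ ρ ∈ Ico (0 : ℝ) 1, ∀ θ ∈ Icc 0 b,
      ‖f (ρ * exp (θ * I))‖ ≤ K * (1 - ρ) ^ (-(1 / 2) : ℝ) := by
  obtain ⟨K, hK⟩ := hf.exists_bound_of_le_norm_one_sub one_half_pos
  refine ⟨K, fun ρ hρ θ hθ => ?_⟩
  have hρle : 1 - ρ ≤ ‖1 - ρ * exp (θ * I)‖ := by
    simpa only [norm_one, norm_ofReal_mul_exp_mul_I hρ.1] using
      norm_sub_norm_le (1 : ℂ) (ρ * exp (θ * I))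
  exact hK _ (mem_unitSector (Ico_subset_Icc_self hρ) hθ) _ (sub_pos.2 hρ.2) hρle

end IsLogTame

/-! ### Contour integrals over sectors of the unit disc -/

lemma HasIntervalIntegral.tendsto_integral_left {E : Type*} [NormedAddCommGroup E]
    [NormedSpace ℝ E] {f : ℝ → E} {a b : ℝ} {S : E} (hf : HasIntervalIntegral f a b S)
    (hab : a < b) : Tendsto (fun x => ∫ t in a..x, f t) (𝓝[<] b) (𝓝 S) := by
  have hcont := intervalIntegral.continuousOn_primitive_interval (f := f) (μ := volume)
    (uIcc_of_le hab.le ▸ (intervalIntegrable_iff_integrableOn_Icc_of_le hab.le).1 hf.1)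
  rw [← hf.2, ← nhdsWithin_Ico_eq_nhdsLT hab]
  exact (hcont b right_mem_uIcc).tendsto.mono_left
    (nhdsWithin_mono _ (uIcc_of_le hab.le ▸ Ico_subset_Icc_self))

lemma hasDerivAt_ofReal_mul_exp_mul_I_left (ρ θ : ℝ) :
    HasDerivAt (fun r : ℝ => r * exp (θ * I)) (exp (θ * I)) ρ := by
  simpa using (Complex.ofRealCLM.hasDerivAt (x := ρ)).mul_const (exp (θ * I))

lemma hasDerivAt_ofReal_mul_exp_mul_I_right (ρ θ : ℝ) :
    HasDerivAt (fun φ : ℝ => ρ * exp (φ * I)) (I * (ρ * exp (θ * I))) θ := by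
  have h : HasDerivAt (fun φ : ℝ => (φ : ℂ) * I) I θ := by
    simpa using (Complex.ofRealCLM.hasDerivAt (x := θ)).mul_const I
  exact (h.cexp.const_mul (ρ : ℂ)).congr_deriv (by ring)

lemma ofReal_mul_exp_mul_I_mem_ball {ρ : ℝ} (hρ : ρ ∈ Ico (0 : ℝ) 1) (θ : ℝ) :
    ρ * exp (θ * I) ∈ Metric.ball (0 : ℂ) 1 := by
  rw [mem_ball_zero_iff, norm_ofReal_mul_exp_mul_I hρ.1]
  exact hρ.2

section Primitive

variable {f F : ℂ → ℂ} {ρ : ℝ}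

lemma integral_ray_eq_sub (hf : DifferentiableOn ℂ f (Metric.ball 0 1))
    (hF : ∀ z ∈ Metric.ball (0 : ℂ) 1, HasDerivAt F (f z) z) (hρ : ρ ∈ Ico (0 : ℝ) 1) (θ : ℝ) :
    ∫ x in 0..ρ, exp (θ * I) * f (x * exp (θ * I)) = F (ρ * exp (θ * I)) - F 0 := by
  have hmem : ∀ x ∈ uIcc 0 ρ, (x : ℂ) * exp (θ * I) ∈ Metric.ball (0 : ℂ) 1 := by
    intro x hx
    rw [uIcc_of_le hρ.1] at hx
    exact ofReal_mul_exp_mul_I_mem_ball ⟨hx.1, hx.2.trans_lt hρ.2⟩ θ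
  have hderiv : ∀ x ∈ uIcc 0 ρ, HasDerivAt (fun x : ℝ => F (x * exp (θ * I)))
      (exp (θ * I) * f (x * exp (θ * I))) x := fun x hx =>
    ((hF _ (hmem x hx)).comp x (hasDerivAt_ofReal_mul_exp_mul_I_left x θ)).congr_deriv
      (mul_comm _ _)
  have hcont : ContinuousOn (fun x : ℝ => exp (θ * I) * f (x * exp (θ * I))) (uIcc 0 ρ) :=
    continuousOn_const.mul (hf.continuousOn.comp (by fun_prop) hmem)
  simpa using intervalIntegral.integral_eq_sub_of_hasDerivAt hderiv hcont.intervalIntegrable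

lemma integral_arc_eq_sub (hf : DifferentiableOn ℂ f (Metric.ball 0 1))
    (hF : ∀ z ∈ Metric.ball (0 : ℂ) 1, HasDerivAt F (f z) z) (hρ : ρ ∈ Ico (0 : ℝ) 1) (b : ℝ) :
    I * ∫ θ in 0..b, ρ * exp (θ * I) * f (ρ * exp (θ * I)) = F (ρ * exp (b * I)) - F ρ := by
  have hderiv : ∀ θ ∈ uIcc 0 b, HasDerivAt (fun θ : ℝ => F (ρ * exp (θ * I)))
      (I * (ρ * exp (θ * I) * f (ρ * exp (θ * I)))) θ := fun θ _ =>
    ((hF _ (ofReal_mul_exp_mul_I_mem_ball hρ θ)).comp θ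
      (hasDerivAt_ofReal_mul_exp_mul_I_right ρ θ)).congr_deriv (by ring)
  have hcont : Continuous fun θ : ℝ => I * (ρ * exp (θ * I) * f (ρ * exp (θ * I))) :=
    continuous_const.mul (.mul (by fun_prop)
      (hf.continuousOn.comp_continuous (by fun_prop) (ofReal_mul_exp_mul_I_mem_ball hρ)))
  rw [← intervalIntegral.integral_const_mul, intervalIntegral.integral_eq_sub_of_hasDerivAt hderiv
    (hcont.intervalIntegrable _ _)]
  simp

end Primitive

lemma integral_ray_eq_integral_add_integral_arc {f : ℂ → ℂ} {ρ : ℝ}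
    (hf : DifferentiableOn ℂ f (Metric.ball 0 1)) (hρ : ρ ∈ Ico (0 : ℝ) 1) (b : ℝ) :
    ∫ x in 0..ρ, exp (b * I) * f (x * exp (b * I)) =
      (∫ x in 0..ρ, f x) + I * ∫ θ in 0..b, ρ * exp (θ * I) * f (ρ * exp (θ * I)) := by
  obtain ⟨F, hF⟩ := hf.isExactOn_ball
  have hreal := integral_ray_eq_sub hf hF hρ 0
  simp only [Complex.ofReal_zero, zero_mul, Complex.exp_zero, mul_one, one_mul] at hreal
  rw [integral_ray_eq_sub hf hF hρ, integral_arc_eq_sub hf hF hρ, hreal]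
  ring

lemma exp_mem_unitSector_sdiff_one {b θ : ℝ} (hb : b ≤ π / 2) (hθ : θ ∈ Ioc 0 b) :
    exp (θ * I) ∈ unitSector b \ {1} := by
  refine ⟨exp_mem_unitSector (Ioc_subset_Icc_self hθ), fun h => ?_⟩
  have hsin : 0 < (exp (θ * I)).im := by
    rw [Complex.exp_ofReal_mul_I_im]
    exact Real.sin_pos_of_pos_of_lt_pi hθ.1 (by linarith [hθ.2, Real.pi_pos])
  simp [mem_singleton_iff.1 h] at hsin

namespace IsLogTame

variable {b : ℝ} {f : ℂ → ℂ}

lemma intervalIntegrable_arc (hf : IsLogTame b f) (hb : b ∈ Icc 0 (π / 2)) :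
    IntervalIntegrable (fun θ : ℝ => f (exp (θ * I))) volume 0 b := by
  obtain ⟨K, hK⟩ := hf.exists_arc_bound hb.2
  have hbound : IntervalIntegrable (fun θ : ℝ => K * θ ^ (-(1 / 2) : ℝ)) volume 0 b :=
    (intervalIntegral.intervalIntegrable_rpow' (by norm_num)).const_mul K
  refine hbound.mono_fun' ?_ ?_ <;> rw [uIoc_of_le hb.1]
  · exact (hf.continuousOn.comp (by fun_prop) fun θ hθ =>
      exp_mem_unitSector_sdiff_one hb.2 hθ).aestronglyMeasurable measurableSet_Ioc
  · refine (ae_restrict_iff' measurableSet_Ioc).2 (.of_forall fun θ hθ => ?_)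
    simpa using hK 1 (right_mem_Icc.2 zero_le_one) θ hθ

lemma intervalIntegrable_ray (hf : IsLogTame b f) {θ : ℝ} (hθ : θ ∈ Icc 0 b) :
    IntervalIntegrable (fun x : ℝ => f (x * exp (θ * I))) volume 0 1 := by
  obtain ⟨K, hK⟩ := hf.exists_ray_bound
  have hbound : IntervalIntegrable (fun x : ℝ => K * (1 - x) ^ (-(1 / 2) : ℝ)) volume 0 1 := by
    have hrpow : IntervalIntegrable (fun x : ℝ => x ^ (-(1 / 2) : ℝ)) volume 0 1 :=
      intervalIntegral.intervalIntegrable_rpow' (by norm_num)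
    simpa using (hrpow.comp_sub_left 1).symm.const_mul K
  refine hbound.mono_fun' ?_ ?_ <;> rw [uIoc_of_le zero_le_one, ← restrict_Ioo_eq_restrict_Ioc]
  · exact (hf.differentiableOn.continuousOn.comp (by fun_prop) fun x hx =>
      ofReal_mul_exp_mul_I_mem_ball (Ioo_subset_Ico_self hx) θ).aestronglyMeasurable
        measurableSet_Ioo
  · exact (ae_restrict_iff' measurableSet_Ioo).2 (.of_forall fun x hx =>
      hK x (Ioo_subset_Ico_self hx) θ hθ)

lemma intervalIntegrable_real (hf : IsLogTame b f) (hb : 0 ≤ b) :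
    IntervalIntegrable (fun x : ℝ => f x) volume 0 1 := by
  simpa using hf.intervalIntegrable_ray (left_mem_Icc.2 hb)

lemma tendsto_exp_mul_I (hf : IsLogTame b f) {θ : ℝ} (hb : b ≤ π / 2) (hθ : θ ∈ Ioc 0 b) :
    Tendsto (fun ρ : ℝ => f (ρ * exp (θ * I))) (𝓝[<] 1) (𝓝 (f (exp (θ * I)))) := by
  refine (hf.continuousOn _ (exp_mem_unitSector_sdiff_one hb hθ)).tendsto.comp
    (tendsto_nhdsWithin_iff.2 ⟨?_, ?_⟩)
  · have hcont : Continuous fun ρ : ℝ => (ρ : ℂ) * exp (θ * I) := by fun_prop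
    simpa using (hcont.tendsto 1).mono_left nhdsWithin_le_nhds
  · filter_upwards [Ico_mem_nhdsLT (zero_lt_one' ℝ)] with ρ hρ
    refine ⟨mem_unitSector (Ico_subset_Icc_self hρ) (Ioc_subset_Icc_self hθ), fun h => hρ.2.ne ?_⟩
    rw [← norm_ofReal_mul_exp_mul_I hρ.1 θ, mem_singleton_iff.1 h, norm_one]

lemma tendsto_integral_arc (hf : IsLogTame b f) (hb : b ∈ Icc 0 (π / 2)) {g : ℝ → ℂ}
    (hg : Continuous g) :
    Tendsto (fun ρ : ℝ => ∫ θ in 0..b, g θ * f (ρ * exp (θ * I))) (𝓝[<] 1)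
      (𝓝 (∫ θ in 0..b, g θ * f (exp (θ * I)))) := by
  obtain ⟨K, hK⟩ := hf.exists_arc_bound hb.2
  have hIco : Ico (0 : ℝ) 1 ∈ 𝓝[<] 1 := Ico_mem_nhdsLT zero_lt_one
  refine intervalIntegral.tendsto_integral_filter_of_dominated_convergence
    (fun θ => ‖g θ‖ * (K * θ ^ (-(1 / 2) : ℝ))) ?_ ?_ ?_ ?_
  · filter_upwards [hIco] with ρ hρ
    exact (hg.mul (hf.differentiableOn.continuousOn.comp_continuous (by fun_prop)
      (ofReal_mul_exp_mul_I_mem_ball hρ))).aestronglyMeasurable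
  · filter_upwards [hIco] with ρ hρ
    refine .of_forall fun θ hθ => ?_
    rw [uIoc_of_le hb.1] at hθ
    rw [norm_mul]
    exact mul_le_mul_of_nonneg_left (hK ρ (Ico_subset_Icc_self hρ) θ hθ) (norm_nonneg _)
  · exact ((intervalIntegral.intervalIntegrable_rpow' (by norm_num)).const_mul K).continuousOn_mul
      hg.norm.continuousOn
  · refine .of_forall fun θ hθ => ?_
    rw [uIoc_of_le hb.1] at hθ
    exact (hf.tendsto_exp_mul_I hb.2 hθ).const_mul _

theorem hasIntervalIntegral_ray (hf : IsLogTame b f) (hb : b ∈ Icc 0 (π / 2)) :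
    HasIntervalIntegral (fun x : ℝ => exp (b * I) * f (x * exp (b * I))) 0 1
      ((∫ x in (0 : ℝ)..1, f x) + I * ∫ θ in 0..b, exp (θ * I) * f (exp (θ * I))) := by
  have hray := (hf.intervalIntegrable_ray (right_mem_Icc.2 hb.1)).const_mul (exp (b * I))
  have hreal := hf.intervalIntegrable_real hb.1
  have harc := (((IsLogTame.id b).mul hf).tendsto_integral_arc hb continuous_one).const_mul I
  simp only [Pi.one_apply, one_mul] at harc
  refine ⟨hray, tendsto_nhds_unique
    (HasIntervalIntegral.tendsto_integral_left ⟨hray, rfl⟩ zero_lt_one) ?_⟩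
  refine ((HasIntervalIntegral.tendsto_integral_left ⟨hreal, rfl⟩ zero_lt_one).add harc).congr' ?_
  filter_upwards [Ico_mem_nhdsLT (zero_lt_one' ℝ)] with ρ hρ
  exact (integral_ray_eq_integral_add_integral_arc hf.differentiableOn hρ b).symm

end IsLogTame

namespace HasIntervalIntegral

variable {f : ℝ → ℂ} {a b : ℝ} {S : ℂ}

lemma re_eq_zero (hf : HasIntervalIntegral f a b S) (hab : a ≤ b)
    (hre : ∀ x ∈ Ioo a b, (f x).re = 0) : S.re = 0 := by
  rw [← (hf.re.congr hab hre).2, intervalIntegral.integral_zero]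

lemma im_eq_zero (hf : HasIntervalIntegral f a b S) (hab : a ≤ b)
    (him : ∀ x ∈ Ioo a b, (f x).im = 0) : S.im = 0 := by
  rw [← (hf.im.congr hab him).2, intervalIntegral.integral_zero]

end HasIntervalIntegral

lemma mul_dslope_zero {f : ℂ → ℂ} (h0 : f 0 = 0) (z : ℂ) : z * dslope f 0 z = f z := by
  simpa [h0] using sub_smul_dslope f 0 z

namespace IsLogTame

section QuarterDisc

variable {f : ℂ → ℂ}

lemma intervalIntegrable_div_ofReal {b : ℝ} (hf : IsLogTame b f) (hb : 0 ≤ b) (h0 : f 0 = 0) :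
    IntervalIntegrable (fun x : ℝ => f x / x) volume 0 1 := by
  refine (hf.dslope_zero.intervalIntegrable_real hb).congr fun x hx => ?_
  rw [uIoc_of_le zero_le_one] at hx
  have hx0 : (x : ℂ) ≠ 0 := Complex.ofReal_ne_zero.2 hx.1.ne'
  exact eq_div_of_mul_eq hx0 ((mul_comm _ _).trans (mul_dslope_zero h0 x))

lemma hasIntervalIntegral_imaginary_div_ofReal (hf : IsLogTame (π / 2) f) (h0 : f 0 = 0) :
    HasIntervalIntegral (fun x : ℝ => f (x * I) / x) 0 1
      ((∫ x in (0 : ℝ)..1, f x / x) + I * ∫ θ in 0..(π / 2), f (exp (θ * I))) := by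
  have hexp : exp ((π / 2 : ℝ) * I) = I := by
    rw [Complex.ofReal_div, Complex.ofReal_ofNat, Complex.exp_pi_div_two_mul_I]
  have hsector := hf.dslope_zero.hasIntervalIntegral_ray (right_mem_Icc.2 Real.pi_div_two_pos.le)
  simp only [mul_dslope_zero h0, hexp] at hsector
  have hslope : ∀ x ∈ Ioo (0 : ℝ) 1, ∀ w : ℂ, w * dslope f 0 (x * w) = f (x * w) / x :=
    fun x hx w => by
      rw [← mul_dslope_zero h0 (x * w), mul_assoc,
        mul_div_cancel_left₀ _ (Complex.ofReal_ne_zero.2 hx.1.ne')]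
  have hreal : HasIntervalIntegral (fun x : ℝ => f x / x) 0 1 (∫ x in (0 : ℝ)..1, dslope f 0 x) :=
    HasIntervalIntegral.congr
      ⟨hf.dslope_zero.intervalIntegrable_real Real.pi_div_two_pos.le, rfl⟩ zero_le_one
      fun x hx => by simpa using hslope x hx 1
  rw [hreal.2]
  exact hsector.congr zero_le_one fun x hx => hslope x hx I

lemma hasIntervalIntegral_re_arc_eq_zero (hf : IsLogTame (π / 2) f) (h0 : f 0 = 0)
    (hreal : ∀ x ∈ Ioo (0 : ℝ) 1, (f x).im = 0) (himag : ∀ x ∈ Ioo (0 : ℝ) 1, (f (x * I)).im = 0) :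
    HasIntervalIntegral (fun θ : ℝ => (f (exp (θ * I))).re) 0 (π / 2) 0 := by
  have harc : HasIntervalIntegral (fun θ : ℝ => f (exp (θ * I))) 0 (π / 2) _ :=
    ⟨hf.intervalIntegrable_arc (right_mem_Icc.2 Real.pi_div_two_pos.le), rfl⟩
  have hline : HasIntervalIntegral (fun x : ℝ => f x / x) 0 1 _ :=
    ⟨hf.intervalIntegrable_div_ofReal Real.pi_div_two_pos.le h0, rfl⟩
  have him := (hf.hasIntervalIntegral_imaginary_div_ofReal h0).im_eq_zero zero_le_one
    fun x hx => by rw [Complex.div_ofReal_im, himag x hx, zero_div]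
  have him' := hline.im_eq_zero zero_le_one
    fun x hx => by rw [Complex.div_ofReal_im, hreal x hx, zero_div]
  rw [Complex.add_im, him', zero_add, Complex.I_mul_im] at him
  simpa only [him] using harc.re

lemma hasIntervalIntegral_re_div (hf : IsLogTame (π / 2) f) (h0 : f 0 = 0)
    (himag : ∀ x ∈ Ioo (0 : ℝ) 1, (f (x * I)).re = 0) {S : ℝ}
    (hS : HasIntervalIntegral (fun θ : ℝ => (f (exp (θ * I))).im) 0 (π / 2) S) :
    HasIntervalIntegral (fun x : ℝ => (f x).re / x) 0 1 S := by
  have harc : HasIntervalIntegral (fun θ : ℝ => f (exp (θ * I))) 0 (π / 2) _ :=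
    ⟨hf.intervalIntegrable_arc (right_mem_Icc.2 Real.pi_div_two_pos.le), rfl⟩
  have hline : HasIntervalIntegral (fun x : ℝ => f x / x) 0 1 _ :=
    ⟨hf.intervalIntegrable_div_ofReal Real.pi_div_two_pos.le h0, rfl⟩
  have hre := (hf.hasIntervalIntegral_imaginary_div_ofReal h0).re_eq_zero zero_le_one
    fun x hx => by rw [Complex.div_ofReal_re, himag x hx, zero_div]
  rw [Complex.add_re, Complex.I_mul_re, ← harc.im.2, hS.2, add_neg_eq_zero] at hre
  simpa only [Complex.div_ofReal_re, hre] using hline.re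

end QuarterDisc

end IsLogTame

section PowerSeries

variable {f : ℂ → ℂ} {a : ℕ → ℝ} {g : ℝ → ℝ}

lemma hasSum_integral_mul_re_arc
    (ha : ∀ z ∈ Metric.ball (0 : ℂ) 1, HasSum (fun n => a n * z ^ n) (f z)) (hg : Continuous g)
    (b : ℝ) {ρ : ℝ} (hρ : ρ ∈ Ico (0 : ℝ) 1) :
    HasSum (fun n => a n * (∫ θ in 0..b, g θ * Real.cos (n * θ)) * ρ ^ n)
      (∫ θ in 0..b, g θ * (f (ρ * exp (θ * I))).re) := by
  have hterm : ∀ (n : ℕ) (θ : ℝ),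
      (a n * (ρ * exp (θ * I)) ^ n).re = a n * ρ ^ n * Real.cos (n * θ) := by
    intro n θ
    have hexp : exp (θ * I) ^ n = exp ((n * θ : ℝ) * I) := by
      rw [← Complex.exp_nat_mul]; push_cast; ring_nf
    rw [mul_pow, hexp, ← mul_assoc, ← Complex.ofReal_pow, ← Complex.ofReal_mul,
      Complex.re_ofReal_mul, Complex.exp_ofReal_mul_I_re]
  have hsummable : Summable fun n => |a n * ρ ^ n| := by
    have hmem := ofReal_mul_exp_mul_I_mem_ball hρ 0
    simpa [norm_mul, abs_mul] using (ha _ hmem).summable.norm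
  have hsum := intervalIntegral.hasSum_integral_of_dominated_convergence (a := 0) (b := b)
    (μ := volume) (F := fun (n : ℕ) θ => g θ * (a n * ρ ^ n * Real.cos (n * θ)))
    (f := fun θ : ℝ => g θ * (f (ρ * exp (θ * I))).re) (fun n θ => |g θ| * |a n * ρ ^ n|)
    (fun n => Continuous.aestronglyMeasurable (by fun_prop)) (fun n => .of_forall fun θ _ => ?_)
    (.of_forall fun θ _ => hsummable.mul_left _) ?_ (.of_forall fun θ _ => ?_)
  · refine hsum.congr_fun fun n => ?_
    rw [mul_right_comm, ← intervalIntegral.integral_const_mul]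
    congr 1 with θ
    ring
  · rw [Real.norm_eq_abs, abs_mul, abs_mul (a n * ρ ^ n)]
    gcongr
    exact mul_le_of_le_one_right (abs_nonneg _) (Real.abs_cos_le_one _)
  · simp only [tsum_mul_left]
    exact Continuous.intervalIntegrable (by fun_prop) _ _
  · simpa only [hterm] using
      (Complex.hasSum_re (ha _ (ofReal_mul_exp_mul_I_mem_ball hρ θ))).mul_left (g θ)

lemma IsLogTame.hasIntervalIntegral_mul_re_arc {b : ℝ} (hf : IsLogTame b f)
    (hb : b ∈ Icc 0 (π / 2))
    (ha : ∀ z ∈ Metric.ball (0 : ℂ) 1, HasSum (fun n => a n * z ^ n) (f z)) (hg : Continuous g)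
    {S : ℝ} (hS : HasSum (fun n => a n * ∫ θ in 0..b, g θ * Real.cos (n * θ)) S) :
    HasIntervalIntegral (fun θ : ℝ => g θ * (f (exp (θ * I))).re) 0 b S := by
  have hgc : Continuous fun θ => (g θ : ℂ) := by fun_prop
  have harc : HasIntervalIntegral (fun θ : ℝ => (g θ : ℂ) * f (exp (θ * I))) 0 b _ :=
    ⟨(hf.intervalIntegrable_arc hb).continuousOn_mul hgc.continuousOn, rfl⟩
  have hre := harc.re
  simp only [Complex.re_ofReal_mul] at hre
  have hlim := (Complex.continuous_re.tendsto _).comp (hf.tendsto_integral_arc hb hgc)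
  have habel := Real.tendsto_tsum_powerSeries_nhdsWithin_lt hS.tendsto_sum_nat
  refine tendsto_nhds_unique hlim (habel.congr' ?_) ▸ hre
  filter_upwards [Ico_mem_nhdsLT (zero_lt_one' ℝ)] with ρ hρ
  have hint : IntervalIntegrable (fun θ : ℝ => (g θ : ℂ) * f (ρ * exp (θ * I))) volume 0 b :=
    (hgc.mul (hf.differentiableOn.continuousOn.comp_continuous (by fun_prop)
      (ofReal_mul_exp_mul_I_mem_ball hρ))).intervalIntegrable _ _
  have hreρ := (HasIntervalIntegral.re ⟨hint, rfl⟩).2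
  simp only [Complex.re_ofReal_mul] at hreρ
  exact (hasSum_integral_mul_re_arc ha hg b hρ).tsum_eq.trans hreρ

end PowerSeries

/-! ### Logarithms on the unit circle -/

lemma exp_notMem_unitSector {b φ : ℝ} (hb : b < φ) (hφ : φ < 2 * π) :
    exp (φ * I) ∉ unitSector b := by
  rintro ⟨⟨ρ, θ⟩, ⟨hρ, hθ⟩, heq : ρ * exp (θ * I) = exp (φ * I)⟩
  have hnorm : ρ = 1 := by
    simpa [abs_of_nonneg hρ.1] using congrArg norm heq
  rw [hnorm, Complex.ofReal_one, one_mul, Complex.exp_eq_exp_iff_exists_int] at heq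
  obtain ⟨n, hn⟩ := heq
  have hangle : θ = φ + n * (2 * π) := by simpa using congrArg Complex.im hn
  have hneg : (n : ℝ) < 0 := by by_contra! h; nlinarith [hθ.2, Real.pi_pos]
  have hgt : (-1 : ℝ) < n := by by_contra! h; nlinarith [hθ.1, Real.pi_pos]
  norm_cast at hneg hgt
  omega

lemma I_notMem_unitSector {b : ℝ} (hb : b < π / 2) : I ∉ unitSector b := by
  have hsector := exp_notMem_unitSector hb (by linarith [Real.pi_pos])
  push_cast at hsector
  rwa [Complex.exp_pi_div_two_mul_I] at hsector

lemma neg_I_notMem_unitSector {b : ℝ} (hb : b < 3 * π / 2) : -I ∉ unitSector b := by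
  have hexp : exp ((3 * π / 2 : ℝ) * I) = -I := by
    rw [← Complex.exp_neg_pi_div_two_mul_I, Complex.exp_eq_exp_iff_exists_int]
    exact ⟨1, by push_cast; ring⟩
  exact hexp ▸ exp_notMem_unitSector hb (by linarith [Real.pi_pos])

lemma log_one_sub_exp {θ : ℝ} (hθ : θ ∈ Ioo 0 (2 * π)) :
    Complex.log (1 - exp (θ * I)) = ⟨Real.log (2 * Real.sin (θ / 2)), (θ - π) / 2⟩ := by
  obtain ⟨hθ₀, hθ₁⟩ := hθ
  have hsin : 0 < 2 * Real.sin (θ / 2) :=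
    mul_pos two_pos (Real.sin_pos_of_pos_of_lt_pi (by linarith) (by linarith))
  have hpolar : 1 - exp (θ * I) = exp ⟨Real.log (2 * Real.sin (θ / 2)), (θ - π) / 2⟩ := by
    obtain ⟨η, rfl⟩ : ∃ η, θ = 2 * η := ⟨θ / 2, by ring⟩
    rw [Complex.mk_eq_add_mul_I, Complex.exp_add, ← Complex.ofReal_exp, Real.exp_log hsin,
      Complex.exp_ofReal_mul_I, Complex.exp_ofReal_mul_I, sub_div, Real.cos_sub_pi_div_two,
      Real.sin_sub_pi_div_two, mul_div_cancel_left₀ η two_ne_zero, Real.cos_two_mul, Real.cos_sq',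
      Real.sin_two_mul]
    push_cast
    ring
  rw [hpolar, Complex.log_exp] <;> dsimp only <;> linarith

lemma log_one_add_exp {θ : ℝ} (hθ : θ ∈ Ioo (-π) π) :
    Complex.log (1 + exp (θ * I)) = ⟨Real.log (2 * Real.cos (θ / 2)), θ / 2⟩ := by
  have hrot : 1 + exp (θ * I) = 1 - exp ((θ + π : ℝ) * I) := by
    push_cast
    rw [add_mul, Complex.exp_add, Complex.exp_pi_mul_I]
    ring
  rw [hrot, log_one_sub_exp ⟨by linarith [hθ.1], by linarith [hθ.2]⟩, add_div,
    Real.sin_add_pi_div_two, add_sub_cancel_right]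

namespace IsLogTame

variable {b : ℝ}

lemma log_one_sub_mul {c : ℂ} (hc : ‖c‖ = 1) (hsector : c⁻¹ ∉ unitSector b) :
    IsLogTame b fun z => Complex.log (1 - c * z) := by
  refine of_continuousOn (fun z hz => ?_) fun z hz => ?_
  · have hz : ‖c * z‖ < 1 := by rwa [norm_mul, hc, one_mul, ← mem_ball_zero_iff]
    have hne : c * z ≠ 1 := fun h => by simp [h] at hz
    exact (DifferentiableAt.clog (f := fun z => 1 - c * z) (by fun_prop)
      (one_sub_mem_slitPlane hz.le hne)).differentiableWithinAt
  · have hne : c * z ≠ 1 := fun h => hsector (eq_inv_of_mul_eq_one_right h ▸ hz)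
    have hle : ‖c * z‖ ≤ 1 := by rw [norm_mul, hc, one_mul]; exact norm_le_one_of_mem_unitSector hz
    exact (ContinuousAt.clog (f := fun z => 1 - c * z) (by fun_prop)
      (one_sub_mem_slitPlane hle hne)).continuousWithinAt

lemma log_one_add (hb : b < π) : IsLogTame b fun z => Complex.log (1 + z) := by
  have hsector := exp_notMem_unitSector hb (by linarith [Real.pi_pos])
  rw [Complex.exp_pi_mul_I] at hsector
  simpa using log_one_sub_mul (c := -1) (by simp) (by simpa [inv_neg] using hsector)

lemma log_one_add_I_mul (hb : b < π / 2) : IsLogTame b fun z => Complex.log (1 + I * z) := by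
  simpa using log_one_sub_mul (c := -I) (by simp) (by simpa [inv_neg] using I_notMem_unitSector hb)

lemma log_one_sub_I_mul (hb : b < 3 * π / 2) : IsLogTame b fun z => Complex.log (1 - I * z) := by
  exact log_one_sub_mul (by simp) (by simpa using neg_I_notMem_unitSector hb)

end IsLogTame

/-- The odd combination `log ((1 + z) / (1 - z))` of logarithms. -/
def logQuot (z : ℂ) : ℂ := Complex.log (1 + z) - Complex.log (1 - z)

/-- The even combination `log (1 - z ^ 2)` of logarithms. -/
def logProd (z : ℂ) : ℂ := Complex.log (1 + z) + Complex.log (1 - z)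

lemma logQuot_zero : logQuot 0 = 0 := by simp [logQuot]

lemma logProd_zero : logProd 0 = 0 := by simp [logProd]

lemma isLogTame_logQuot {b : ℝ} (hb : b < π) : IsLogTame b logQuot :=
  (IsLogTame.log_one_add hb).sub (IsLogTame.log_one_sub b)

lemma isLogTame_logProd {b : ℝ} (hb : b < π) : IsLogTame b logProd :=
  (IsLogTame.log_one_add hb).add (IsLogTame.log_one_sub b)

lemma logQuot_ofReal {x : ℝ} (hx : x ∈ Icc (-1 : ℝ) 1) :
    logQuot x = (Real.log (1 + x) - Real.log (1 - x) : ℝ) := by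
  rw [Complex.ofReal_sub, Complex.ofReal_log (by linarith [hx.1]),
    Complex.ofReal_log (by linarith [hx.2])]
  push_cast
  rfl

lemma logProd_ofReal {x : ℝ} (hx : x ∈ Icc (-1 : ℝ) 1) :
    logProd x = (Real.log (1 + x) + Real.log (1 - x) : ℝ) := by
  rw [Complex.ofReal_add, Complex.ofReal_log (by linarith [hx.1]),
    Complex.ofReal_log (by linarith [hx.2])]
  push_cast
  rfl

lemma logQuot_neg (z : ℂ) : logQuot (-z) = -logQuot z := by
  rw [logQuot, logQuot, neg_sub, sub_neg_eq_add, ← sub_eq_add_neg]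

lemma logProd_neg (z : ℂ) : logProd (-z) = logProd z := by
  rw [logProd, logProd, sub_neg_eq_add, ← sub_eq_add_neg, add_comm]

section Strip

variable {z : ℂ}

lemma one_add_mem_slitPlane_of_abs_re_lt_one (hz : |z.re| < 1) :
    1 + z ∈ Complex.slitPlane :=
  Or.inl (by rw [Complex.add_re, Complex.one_re]; linarith [(abs_lt.1 hz).1])

lemma one_sub_mem_slitPlane_of_abs_re_lt_one (hz : |z.re| < 1) :
    1 - z ∈ Complex.slitPlane :=
  Or.inl (by rw [Complex.sub_re, Complex.one_re]; linarith [(abs_lt.1 hz).2])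

lemma log_one_add_conj (hz : |z.re| < 1) :
    Complex.log (1 + conj z) = conj (Complex.log (1 + z)) := by
  rw [← Complex.log_conj _ (Complex.slitPlane_arg_ne_pi
    (one_add_mem_slitPlane_of_abs_re_lt_one hz)), map_add, map_one]

lemma log_one_sub_conj (hz : |z.re| < 1) :
    Complex.log (1 - conj z) = conj (Complex.log (1 - z)) := by
  rw [← Complex.log_conj _ (Complex.slitPlane_arg_ne_pi
    (one_sub_mem_slitPlane_of_abs_re_lt_one hz)), map_sub, map_one]

lemma logQuot_conj (hz : |z.re| < 1) : logQuot (conj z) = conj (logQuot z) := by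
  rw [logQuot, logQuot, map_sub, log_one_add_conj hz, log_one_sub_conj hz]

lemma logProd_conj (hz : |z.re| < 1) : logProd (conj z) = conj (logProd z) := by
  rw [logProd, logProd, map_add, log_one_add_conj hz, log_one_sub_conj hz]

lemma hasDerivAt_logQuot (hz : |z.re| < 1) : HasDerivAt logQuot (2 / (1 - z ^ 2)) z := by
  have hadd := one_add_mem_slitPlane_of_abs_re_lt_one hz
  have hsub := one_sub_mem_slitPlane_of_abs_re_lt_one hz
  refine ((((hasDerivAt_id' z).const_add 1).clog hadd).sub
    (((hasDerivAt_id' z).const_sub 1).clog hsub)).congr_deriv ?_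
  have hadd_ne := Complex.slitPlane_ne_zero hadd
  have hsub_ne := Complex.slitPlane_ne_zero hsub
  rw [show 1 - z ^ 2 = (1 + z) * (1 - z) by ring]
  field_simp
  ring

lemma hasDerivAt_logProd (hz : |z.re| < 1) : HasDerivAt logProd (-(2 * z / (1 - z ^ 2))) z := by
  have hadd := one_add_mem_slitPlane_of_abs_re_lt_one hz
  have hsub := one_sub_mem_slitPlane_of_abs_re_lt_one hz
  refine ((((hasDerivAt_id' z).const_add 1).clog hadd).add
    (((hasDerivAt_id' z).const_sub 1).clog hsub)).congr_deriv ?_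
  have hadd_ne := Complex.slitPlane_ne_zero hadd
  have hsub_ne := Complex.slitPlane_ne_zero hsub
  rw [show 1 - z ^ 2 = (1 + z) * (1 - z) by ring]
  field_simp
  ring

end Strip

lemma re_logQuot_ofReal_mul_I (x : ℝ) : (logQuot (x * I)).re = 0 := by
  have hconj := logQuot_conj (z := x * I) (by simp)
  rw [map_mul, Complex.conj_ofReal, Complex.conj_I, mul_neg, logQuot_neg] at hconj
  have hre := congrArg Complex.re hconj
  rw [Complex.neg_re, Complex.conj_re] at hre
  linarith

lemma im_logProd_ofReal_mul_I (x : ℝ) : (logProd (x * I)).im = 0 := by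
  have hconj := logProd_conj (z := x * I) (by simp)
  rw [map_mul, Complex.conj_ofReal, Complex.conj_I, mul_neg, logProd_neg] at hconj
  exact Complex.conj_eq_iff_im.1 hconj.symm

section Arc

variable {α : ℝ}

lemma logQuot_exp (hα : α ∈ Ioo 0 π) :
    logQuot (exp (α * I)) = ⟨-Real.log (Real.tan (α / 2)), π / 2⟩ := by
  obtain ⟨hα₀, hα₁⟩ := hα
  have hsin := Real.sin_pos_of_pos_of_lt_pi (half_pos hα₀) (by linarith)
  have hcos := Real.cos_pos_of_mem_Ioo (x := α / 2) ⟨by linarith, by linarith⟩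
  rw [logQuot, log_one_add_exp ⟨by linarith, hα₁⟩,
    log_one_sub_exp ⟨hα₀, by linarith⟩, Real.tan_eq_sin_div_cos,
    Real.log_div hsin.ne' hcos.ne', Real.log_mul two_ne_zero hsin.ne',
    Real.log_mul two_ne_zero hcos.ne']
  apply Complex.ext <;> simp
  ring

lemma logProd_exp (hα : α ∈ Ioo 0 π) :
    logProd (exp (α * I)) = ⟨Real.log (2 * Real.sin α), α - π / 2⟩ := by
  obtain ⟨hα₀, hα₁⟩ := hα
  have hsin := Real.sin_pos_of_pos_of_lt_pi (half_pos hα₀) (by linarith)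
  have hcos := Real.cos_pos_of_mem_Ioo (x := α / 2) ⟨by linarith, by linarith⟩
  have hdouble : 2 * Real.sin α = 2 * Real.cos (α / 2) * (2 * Real.sin (α / 2)) := by
    rw [show α = 2 * (α / 2) by ring, Real.sin_two_mul]; ring_nf
  rw [hdouble, Real.log_mul (by positivity) (by positivity), logProd,
    log_one_add_exp ⟨by linarith, hα₁⟩, log_one_sub_exp ⟨hα₀, by linarith⟩]
  refine Complex.ext rfl ?_
  rw [Complex.add_im]
  ring

end Arc

lemma hasSum_logQuot {z : ℂ} (hz : z ∈ Metric.ball 0 1) :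
    HasSum (fun n : ℕ => ((1 - (-1) ^ n) / n : ℝ) * z ^ n) (logQuot z) := by
  rw [mem_ball_zero_iff] at hz
  have hsum := (Complex.hasSum_taylorSeries_log hz).add (Complex.hasSum_taylorSeries_neg_log hz)
  rw [← sub_eq_add_neg] at hsum
  refine hsum.congr_fun fun n => ?_
  push_cast
  ring

lemma hasSum_logProd {z : ℂ} (hz : z ∈ Metric.ball 0 1) :
    HasSum (fun n : ℕ => (-(1 + (-1) ^ n) / n : ℝ) * z ^ n) (logProd z) := by
  rw [mem_ball_zero_iff] at hz
  have hsum := (Complex.hasSum_taylorSeries_log hz).sub (Complex.hasSum_taylorSeries_neg_log hz)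
  rw [sub_neg_eq_add] at hsum
  refine hsum.congr_fun fun n => ?_
  push_cast
  ring

/-! ### Log-trigonometric integrals over `[0, π / 2]` -/

/-- Apéry's constant `ζ(3)` as a real number; the term `n = 0` of the sum is `1 / 0 = 0`. -/
def aperyConst : ℝ := ∑' n : ℕ, 1 / (n : ℝ) ^ 3

lemma riemannZeta_three : riemannZeta 3 = aperyConst := by
  have hzeta := zeta_nat_eq_tsum_of_gt_one (k := 3) (by norm_num)
  rw [aperyConst]
  push_cast at hzeta ⊢
  exact hzeta

lemma hasSum_one_div_pow_three : HasSum (fun n : ℕ => 1 / (n : ℝ) ^ 3) aperyConst :=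
  (Real.summable_one_div_nat_pow.2 (by norm_num)).hasSum

lemma hasSum_one_div_even_pow_three :
    HasSum (fun k : ℕ => 1 / ((2 * k : ℕ) : ℝ) ^ 3) (aperyConst / 8) :=
  (hasSum_one_div_pow_three.div_const 8).congr_fun fun k => by
    rw [Nat.cast_mul, mul_pow, div_div, mul_comm]; norm_num

lemma hasSum_one_div_odd_pow_three :
    HasSum (fun k : ℕ => 1 / ((2 * k + 1 : ℕ) : ℝ) ^ 3) (7 / 8 * aperyConst) := by
  have hodd : Summable fun k : ℕ => 1 / ((2 * k + 1 : ℕ) : ℝ) ^ 3 :=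
    hasSum_one_div_pow_three.summable.comp_injective (i := fun k => 2 * k + 1)
      fun j k h => by simpa using h
  have hsplit := (hasSum_one_div_even_pow_three.even_add_odd hodd.hasSum
    (f := fun n : ℕ => 1 / (n : ℝ) ^ 3)).unique hasSum_one_div_pow_three
  convert hodd.hasSum using 1
  linarith

lemma integral_pi_div_two_sub_mul_cos {c : ℝ} (hc : c ≠ 0) :
    ∫ θ in (0 : ℝ)..π / 2, (π / 2 - θ) * Real.cos (c * θ) =
      (1 - Real.cos (c * (π / 2))) / c ^ 2 := by
  rw [intervalIntegral.integral_eq_sub_of_hasDerivAt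
    (f := fun θ => (π / 2 - θ) * Real.sin (c * θ) / c - Real.cos (c * θ) / c ^ 2)]
  · simp; ring
  · intro θ _
    have hlin := (hasDerivAt_id' θ).const_mul c
    have hsub := (hasDerivAt_id' θ).const_sub (π / 2)
    refine (((hsub.mul hlin.sin).div_const c).sub (hlin.cos.div_const (c ^ 2))).congr_deriv ?_
    field_simp
    ring
  · exact Continuous.intervalIntegrable (by fun_prop) _ _

lemma integral_pi_div_two_sub_sq_mul_cos {c : ℝ} (hc : c ≠ 0) :
    ∫ θ in (0 : ℝ)..π / 2, (π / 2 - θ) ^ 2 * Real.cos (c * θ) =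
      π / c ^ 2 - 2 * Real.sin (c * (π / 2)) / c ^ 3 := by
  rw [intervalIntegral.integral_eq_sub_of_hasDerivAt
    (f := fun θ => (π / 2 - θ) ^ 2 * Real.sin (c * θ) / c
      - 2 * (π / 2 - θ) * Real.cos (c * θ) / c ^ 2 - 2 * Real.sin (c * θ) / c ^ 3)]
  · simp; ring
  · intro θ _
    have hlin := (hasDerivAt_id' θ).const_mul c
    have hsub := (hasDerivAt_id' θ).const_sub (π / 2)
    refine (((((hsub.pow 2).mul hlin.sin).div_const c).sub
      (((hsub.const_mul 2).mul hlin.cos).div_const (c ^ 2))).sub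
      ((hlin.sin.const_mul 2).div_const (c ^ 3))).congr_deriv ?_
    simp only [Pi.pow_apply]
    field_simp
    ring
  · exact Continuous.intervalIntegrable (by fun_prop) _ _

lemma cos_odd_mul_pi_div_two (k : ℕ) : Real.cos ((2 * k + 1 : ℕ) * (π / 2)) = 0 :=
  Real.cos_eq_zero_iff.2 ⟨k, by push_cast; ring⟩

lemma sin_even_mul_pi_div_two (k : ℕ) : Real.sin ((2 * k : ℕ) * (π / 2)) = 0 :=
  Real.sin_eq_zero_iff.2 ⟨k, by push_cast; ring⟩

lemma mem_Ioo_zero_pi_of_mem_Ioo {α : ℝ} (hα : α ∈ Ioo 0 (π / 2)) : α ∈ Ioo 0 π :=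
  ⟨hα.1, by linarith [hα.1, hα.2]⟩

lemma hasIntervalIntegral_sub_mul_log_tan :
    HasIntervalIntegral (fun α => (π / 2 - α) * Real.log (Real.tan (α / 2))) 0 (π / 2)
      (-(7 / 4 * aperyConst)) := by
  have hseries := (isLogTame_logQuot (half_lt_self Real.pi_pos)).hasIntervalIntegral_mul_re_arc
    (right_mem_Icc.2 Real.pi_div_two_pos.le) (fun z hz => hasSum_logQuot hz)
    (g := fun θ => π / 2 - θ) (by fun_prop) (S := 0 + 2 * (7 / 8 * aperyConst))
    (HasSum.even_add_odd ?even ?odd)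
  case even => exact hasSum_zero.congr_fun fun k => by simp [pow_mul]
  case odd =>
    refine (hasSum_one_div_odd_pow_three.mul_left 2).congr_fun fun k => ?_
    have hk : ((2 * k + 1 : ℕ) : ℝ) ≠ 0 := by positivity
    rw [integral_pi_div_two_sub_mul_cos hk, cos_odd_mul_pi_div_two, pow_succ, pow_mul]
    field_simp
    norm_num
  have hvalue : -1 * (0 + 2 * (7 / 8 * aperyConst)) = -(7 / 4 * aperyConst) := by ring
  refine hvalue ▸ (hseries.const_mul (-1)).congr Real.pi_div_two_pos.le fun α hα => ?_
  rw [logQuot_exp (mem_Ioo_zero_pi_of_mem_Ioo hα)]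
  ring

lemma hasIntervalIntegral_sub_sq_mul_log_two_mul_sin :
    HasIntervalIntegral (fun α => (π / 2 - α) ^ 2 * Real.log (2 * Real.sin α)) 0 (π / 2)
      (-(π / 4 * aperyConst)) := by
  have hseries := (isLogTame_logProd (half_lt_self Real.pi_pos)).hasIntervalIntegral_mul_re_arc
    (right_mem_Icc.2 Real.pi_div_two_pos.le) (fun z hz => hasSum_logProd hz)
    (g := fun θ => (π / 2 - θ) ^ 2) (by fun_prop) (S := -2 * π * (aperyConst / 8) + 0)
    (HasSum.even_add_odd ?even ?odd)
  case even =>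
    refine (hasSum_one_div_even_pow_three.mul_left (-2 * π)).congr_fun fun k => ?_
    rcases Nat.eq_zero_or_pos k with rfl | hk
    · simp
    have hk : ((2 * k : ℕ) : ℝ) ≠ 0 := by positivity
    rw [integral_pi_div_two_sub_sq_mul_cos hk, sin_even_mul_pi_div_two, pow_mul]
    field_simp
    ring
  case odd => exact hasSum_zero.congr_fun fun k => by simp [pow_succ, pow_mul]
  have hvalue : -2 * π * (aperyConst / 8) + 0 = -(π / 4 * aperyConst) := by ring
  refine hvalue ▸ hseries.congr Real.pi_div_two_pos.le fun α hα => ?_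
  rw [logProd_exp (mem_Ioo_zero_pi_of_mem_Ioo hα)]

lemma hasIntervalIntegral_log_two_mul_sin :
    HasIntervalIntegral (fun α => Real.log (2 * Real.sin α)) 0 (π / 2) 0 := by
  refine ((isLogTame_logProd (half_lt_self Real.pi_pos)).hasIntervalIntegral_re_arc_eq_zero
    logProd_zero (fun x hx => ?_) fun x _ => im_logProd_ofReal_mul_I x).congr
    Real.pi_div_two_pos.le fun α hα => ?_
  · rw [logProd_ofReal ⟨by linarith [hx.1], hx.2.le⟩, Complex.ofReal_im]
  · rw [logProd_exp (mem_Ioo_zero_pi_of_mem_Ioo hα)]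

lemma hasIntervalIntegral_log_tan_sq :
    HasIntervalIntegral (fun α => Real.log (Real.tan (α / 2)) ^ 2) 0 (π / 2) (π ^ 3 / 8) := by
  have htame := isLogTame_logQuot (half_lt_self Real.pi_pos)
  have hzero := (htame.mul htame).hasIntervalIntegral_re_arc_eq_zero
    (by simp only [logQuot_zero, mul_zero]) (fun x hx => ?real)
    (fun x _ => by simp [re_logQuot_ofReal_mul_I])
  case real =>
    rw [logQuot_ofReal ⟨by linarith [hx.1], hx.2.le⟩, ← Complex.ofReal_mul, Complex.ofReal_im]
  have hvalue : 0 + (π / 2 - 0) • (π ^ 2 / 4) = π ^ 3 / 8 := by rw [smul_eq_mul]; ring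
  refine hvalue ▸ (hzero.add (.const _ _ _)).congr Real.pi_div_two_pos.le fun α hα => ?_
  rw [Complex.mul_re, logQuot_exp (mem_Ioo_zero_pi_of_mem_Ioo hα)]
  ring

lemma hasIntervalIntegral_log_tan_sq_mul_log_two_mul_sin :
    HasIntervalIntegral
      (fun α => Real.log (Real.tan (α / 2)) ^ 2 * Real.log (2 * Real.sin α)) 0 (π / 2)
      (-(7 / 4 * π * aperyConst)) := by
  have htame := isLogTame_logQuot (half_lt_self Real.pi_pos)
  have hzero := ((htame.mul htame).mul
    (isLogTame_logProd (half_lt_self Real.pi_pos))).hasIntervalIntegral_re_arc_eq_zero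
    (by simp only [logQuot_zero, mul_zero, zero_mul]) (fun x hx => ?real)
    (fun x _ => by simp [re_logQuot_ofReal_mul_I, im_logProd_ofReal_mul_I])
  case real =>
    have hx : x ∈ Icc (-1 : ℝ) 1 := ⟨by linarith [hx.1], hx.2.le⟩
    rw [logQuot_ofReal hx, logProd_ofReal hx, ← Complex.ofReal_mul, ← Complex.ofReal_mul,
      Complex.ofReal_im]
  have hsum := (hzero.add (hasIntervalIntegral_log_two_mul_sin.const_mul (π ^ 2 / 4))).add
    (hasIntervalIntegral_sub_mul_log_tan.const_mul π)
  have hvalue : 0 + π ^ 2 / 4 * 0 + π * -(7 / 4 * aperyConst) = -(7 / 4 * π * aperyConst) := by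
    ring
  refine hvalue ▸ hsum.congr Real.pi_div_two_pos.le fun α hα => ?_
  have hα := mem_Ioo_zero_pi_of_mem_Ioo hα
  simp only [Complex.mul_re, Complex.mul_im, logQuot_exp hα, logProd_exp hα]
  ring

lemma hasIntervalIntegral_pi_div_two_sub_sq :
    HasIntervalIntegral (fun α => (π / 2 - α) ^ 2) 0 (π / 2) (π ^ 3 / 24) := by
  refine ⟨Continuous.intervalIntegrable (by fun_prop) _ _, ?_⟩
  rw [intervalIntegral.integral_comp_sub_left fun x => x ^ 2]
  simp
  ring

/-! ### Logarithmic integrals on the real line -/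

lemma hasIntervalIntegral_log_sub_log_div :
    HasIntervalIntegral (fun x => (Real.log (1 + x) - Real.log (1 - x)) / x) 0 1 (π ^ 2 / 4) := by
  have harc : HasIntervalIntegral (fun θ : ℝ => (logQuot (exp (θ * I))).im) 0 (π / 2)
      ((π / 2 - 0) • (π / 2)) :=
    (HasIntervalIntegral.const _ _ _).congr Real.pi_div_two_pos.le fun α hα => by
      rw [logQuot_exp (mem_Ioo_zero_pi_of_mem_Ioo hα)]
  have hvalue : (π / 2 - 0) • (π / 2) = π ^ 2 / 4 := by rw [smul_eq_mul]; ring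
  refine hvalue ▸ ((isLogTame_logQuot (half_lt_self Real.pi_pos)).hasIntervalIntegral_re_div
    logQuot_zero (fun x _ => re_logQuot_ofReal_mul_I x) harc).congr zero_le_one fun x hx => ?_
  rw [logQuot_ofReal ⟨by linarith [hx.1], hx.2.le⟩, Complex.ofReal_re]

lemma hasIntervalIntegral_log_sq_sub_log_sq_div :
    HasIntervalIntegral (fun x => (Real.log (1 + x) ^ 2 - Real.log (1 - x) ^ 2) / x) 0 1
      (-(7 / 4 * aperyConst)) := by
  have harc : HasIntervalIntegral
      (fun θ : ℝ => (logQuot (exp (θ * I)) * logProd (exp (θ * I))).im) 0 (π / 2)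
      (-(7 / 4 * aperyConst) + π / 2 * 0) :=
    (hasIntervalIntegral_sub_mul_log_tan.add
      (hasIntervalIntegral_log_two_mul_sin.const_mul (π / 2))).congr Real.pi_div_two_pos.le
      fun α hα => by
        have hα := mem_Ioo_zero_pi_of_mem_Ioo hα
        rw [Complex.mul_im, logQuot_exp hα, logProd_exp hα]
        ring
  rw [mul_zero, add_zero] at harc
  refine (((isLogTame_logQuot (half_lt_self Real.pi_pos)).mul
    (isLogTame_logProd (half_lt_self Real.pi_pos))).hasIntervalIntegral_re_div
    (by simp only [logQuot_zero, zero_mul])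
    (fun x _ => by simp [re_logQuot_ofReal_mul_I, im_logProd_ofReal_mul_I]) harc).congr
    zero_le_one fun x hx => ?_
  have hx : x ∈ Icc (-1 : ℝ) 1 := ⟨by linarith [hx.1], hx.2.le⟩
  rw [logQuot_ofReal hx, logProd_ofReal hx, ← Complex.ofReal_mul, Complex.ofReal_re]
  ring

lemma intervalIntegrable_log_one_sub_pow_div {k : ℕ} (hk : k ≠ 0) :
    IntervalIntegrable (fun x : ℝ => Real.log (1 - x) ^ k / x) volume 0 1 := by
  have htame :=
    ((IsLogTame.log_one_sub 0).pow k).intervalIntegrable_div_ofReal le_rfl (by simp [hk])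
  refine (HasIntervalIntegral.re ⟨htame, rfl⟩).1.congr fun x hx => ?_
  rw [uIoc_of_le zero_le_one] at hx
  have hlog : Complex.log (1 - x) = (Real.log (1 - x) : ℝ) := by
    rw [Complex.ofReal_log (by linarith [hx.2])]; push_cast; rfl
  rw [hlog, ← Complex.ofReal_pow, ← Complex.ofReal_div, Complex.ofReal_re]

lemma hasIntervalIntegral_log_pow_div_sub_one {k : ℕ} (hk : k ≠ 0) {S : ℝ}
    (hS : HasIntervalIntegral
      (fun x => (Real.log (1 + x) ^ k - Real.log (1 - x) ^ k) / x) 0 1 S) :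
    HasIntervalIntegral (fun y => Real.log y ^ k / (y - 1)) 0 2 S := by
  obtain ⟨T, hT⟩ : ∃ T, HasIntervalIntegral (fun x => Real.log (1 - x) ^ k / x) 0 1 T :=
    ⟨_, intervalIntegrable_log_one_sub_pow_div hk, rfl⟩
  have hleft : HasIntervalIntegral (fun y => Real.log y ^ k / (y - 1)) (1 - 1) (1 - 0) (-1 * T) :=
    (HasIntervalIntegral.comp_strictAnti_iff (φ := fun x => 1 - x) (φ' := fun _ => 1) zero_le_one
      (by fun_prop) (fun x _ => (hasDerivAt_id' x).const_sub 1) fun _ _ => one_pos).2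
      ((hT.const_mul (-1)).congr zero_le_one fun x _ => by
        rw [one_smul, sub_sub_cancel_left, div_neg, neg_one_mul])
  have hright : HasIntervalIntegral (fun y => Real.log y ^ k / (y - 1)) (1 + 0) (1 + 1) (S + T) :=
    (HasIntervalIntegral.comp_strictMono_iff (φ := fun x => 1 + x) (φ' := fun _ => 1) zero_le_one
      (by fun_prop) (fun x _ => (hasDerivAt_id' x).const_add 1) fun _ _ => one_pos).2
      ((hS.add hT).congr zero_le_one fun x _ => by
        rw [one_smul, add_sub_cancel_left, ← add_div, sub_add_cancel])
  norm_num at hleft hright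
  simpa using hleft.trans hright

lemma hasIntervalIntegral_log_div_sub_one :
    HasIntervalIntegral (fun y => Real.log y / (y - 1)) 0 2 (π ^ 2 / 4) := by
  simpa using hasIntervalIntegral_log_pow_div_sub_one one_ne_zero
    (by simpa using hasIntervalIntegral_log_sub_log_div)

lemma hasIntervalIntegral_log_sq_div_sub_one :
    HasIntervalIntegral (fun y => Real.log y ^ 2 / (y - 1)) 0 2 (-(7 / 4 * aperyConst)) :=
  hasIntervalIntegral_log_pow_div_sub_one two_ne_zero hasIntervalIntegral_log_sq_sub_log_sq_div

/-- The product `log r * log (r / 2)`. -/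
def logMulLogHalf (r : ℝ) : ℝ := Real.log r * (Real.log r - Real.log 2)

lemma hasIntervalIntegral_logMulLogHalf_div_sub_one :
    HasIntervalIntegral (fun r => logMulLogHalf r / (r - 1)) 0 2
      (-(7 / 4 * aperyConst) - Real.log 2 * (π ^ 2 / 4)) :=
  (hasIntervalIntegral_log_sq_div_sub_one.sub
    (hasIntervalIntegral_log_div_sub_one.const_mul (Real.log 2))).congr zero_le_two
    fun r _ => by rw [logMulLogHalf]; ring

lemma hasIntervalIntegral_two_mul_logMulLogHalf_div_sq_sub_one :
    HasIntervalIntegral (fun r => 2 * r * logMulLogHalf r / (r ^ 2 - 1)) 0 √2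
      (1 / 4 * -(7 / 4 * aperyConst) - Real.log 2 / 2 * (π ^ 2 / 4)) := by
  have hsum := (hasIntervalIntegral_log_sq_div_sub_one.const_mul (1 / 4)).sub
    (hasIntervalIntegral_log_div_sub_one.const_mul (Real.log 2 / 2))
  refine ((HasIntervalIntegral.comp_strictMono_iff (φ := fun r => r ^ 2) (φ' := fun r => 2 * r)
    (Real.sqrt_nonneg 2) (by fun_prop) (fun r _ => by simpa using hasDerivAt_pow 2 r)
    fun r hr => by linarith [hr.1]).1 (by simpa using hsum)).congr (Real.sqrt_nonneg 2)
    fun r _ => ?_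
  rw [Real.log_pow, logMulLogHalf, smul_eq_mul]
  push_cast
  ring

-- On `[0, √2]` the identity `1 / (1 + r) = 2 r / (r ^ 2 - 1) - 1 / (r - 1)` trades the integral of
-- `logMulLogHalf r / (1 + r)` for the two preceding ones.
lemma exists_hasIntervalIntegral_logMulLogHalf_div :
    ∃ T U, HasIntervalIntegral (fun r => logMulLogHalf r / (1 + r)) 0 √2 T ∧
      HasIntervalIntegral (fun r => logMulLogHalf r / (r - 1)) √2 2 U ∧
      T - U = 21 / 16 * aperyConst + π ^ 2 * Real.log 2 / 8 := by
  obtain ⟨T, U, hT, hU, hTU⟩ := hasIntervalIntegral_logMulLogHalf_div_sub_one.exists_split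
    (b := √2) ⟨Real.sqrt_nonneg 2, Real.sqrt_le_iff.2 (by norm_num)⟩
  refine ⟨_, U, (hasIntervalIntegral_two_mul_logMulLogHalf_div_sq_sub_one.sub hT).congr
    (Real.sqrt_nonneg 2) fun r hr => ?_, hU, by linarith⟩
  rcases eq_or_ne r 1 with rfl | hr1
  · simp [logMulLogHalf]
  have hsub : r - 1 ≠ 0 := sub_ne_zero.2 hr1
  have hadd : 1 + r ≠ 0 := by linarith [hr.1]
  rw [show r ^ 2 - 1 = (r - 1) * (1 + r) by ring]
  field_simp
  ring

lemma tan_pi_div_eight_add_one : Real.tan (π / 8) + 1 = √2 := by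
  have hpos : 0 < Real.tan (π / 8) :=
    Real.tan_pos_of_pos_of_lt_pi_div_two (by positivity) (by linarith [Real.pi_pos])
  have hdouble : Real.tan (2 * (π / 8)) = 1 := by
    rw [← Real.tan_pi_div_four]; ring_nf
  rw [Real.tan_two_mul] at hdouble
  have hne : 1 - Real.tan (π / 8) ^ 2 ≠ 0 := fun h => by simp [h] at hdouble
  rw [div_eq_one_iff_eq hne] at hdouble
  exact (Real.sqrt_eq_iff_mul_self_eq zero_le_two (by linarith)).2 (by nlinarith) |>.symm

lemma tan_three_pi_div_eight_sub_one : Real.tan (3 * π / 8) - 1 = √2 := by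
  have hinv : Real.tan (3 * π / 8) = (√2 - 1)⁻¹ := by
    rw [← tan_pi_div_eight_add_one, add_sub_cancel_right, ← Real.tan_pi_div_two_sub]; ring_nf
  rw [hinv, sub_eq_iff_eq_add, inv_eq_iff_eq_inv, ← mul_eq_one_iff_eq_inv₀ (by positivity)]
  nlinarith [Real.sq_sqrt (zero_le_two (α := ℝ))]

/-- The ratio `√2 |1 - w| / |1 + i w|` at `w = e^{iψ}`, written as a tangent. -/
def minusRatio (ψ : ℝ) : ℝ := Real.tan (π / 4 + ψ / 2) - 1

/-- The ratio `√2 |1 + w| / |1 - i w|` at `w = e^{iψ}`, written as a tangent. -/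
def plusRatio (ψ : ℝ) : ℝ := Real.tan (π / 4 - ψ / 2) + 1

section Ratio

variable {ψ : ℝ}

lemma one_add_minusRatio_pos (hψ : ψ ∈ Ioo (-(π / 2)) (π / 2)) : 0 < 1 + minusRatio ψ := by
  rw [minusRatio, add_sub_cancel]
  exact Real.tan_pos_of_pos_of_lt_pi_div_two (by linarith [hψ.1]) (by linarith [hψ.2])

lemma plusRatio_sub_one_pos (hψ : ψ ∈ Ioo (-(π / 2)) (π / 2)) : 0 < plusRatio ψ - 1 := by
  rw [plusRatio, add_sub_cancel_right]
  exact Real.tan_pos_of_pos_of_lt_pi_div_two (by linarith [hψ.2]) (by linarith [hψ.1])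

lemma hasDerivAt_minusRatio (hψ : ψ ∈ Ioo (-(π / 2)) (π / 2)) :
    HasDerivAt minusRatio ((1 + minusRatio ψ) / Real.cos ψ) ψ := by
  have hcos : 0 < Real.cos (π / 4 + ψ / 2) :=
    Real.cos_pos_of_mem_Ioo ⟨by linarith [hψ.1, hψ.2], by linarith [hψ.2]⟩
  have hsin : 0 < Real.sin (π / 4 + ψ / 2) :=
    Real.sin_pos_of_pos_of_lt_pi (by linarith [hψ.1]) (by linarith [hψ.1, hψ.2])
  have hdouble : Real.cos ψ = 2 * Real.sin (π / 4 + ψ / 2) * Real.cos (π / 4 + ψ / 2) := by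
    rw [← Real.sin_two_mul, ← Real.sin_add_pi_div_two]; ring_nf
  have hlin := ((hasDerivAt_id' ψ).div_const 2).const_add (π / 4)
  refine (((Real.hasDerivAt_tan hcos.ne').comp ψ hlin).sub_const 1).congr_deriv ?_
  rw [minusRatio, add_sub_cancel, hdouble, Real.tan_eq_sin_div_cos]
  generalize π / 4 + ψ / 2 = η at hcos hsin ⊢
  field_simp

lemma hasDerivAt_plusRatio (hψ : ψ ∈ Ioo (-(π / 2)) (π / 2)) :
    HasDerivAt plusRatio (-((plusRatio ψ - 1) / Real.cos ψ)) ψ := by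
  have hreflect : plusRatio = fun ψ => minusRatio (-ψ) + 2 := by
    funext ψ
    rw [plusRatio, minusRatio, neg_div, ← sub_eq_add_neg]
    ring
  have hneg := hasDerivAt_minusRatio (ψ := -ψ) ⟨by linarith [hψ.2], by linarith [hψ.1]⟩
  rw [hreflect]
  refine ((hneg.comp ψ (hasDerivAt_neg ψ)).add_const 2).congr_deriv ?_
  rw [Real.cos_neg]
  ring

lemma tan_half_mem_Ioo (hψ : ψ ∈ Ioo 0 (π / 2)) : Real.tan (ψ / 2) ∈ Ioo 0 1 :=
  ⟨Real.tan_pos_of_pos_of_lt_pi_div_two (by linarith [hψ.1]) (by linarith [hψ.1, hψ.2]), by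
    rw [← Real.tan_pi_div_four]
    exact Real.tan_lt_tan_of_lt_of_lt_pi_div_two (by linarith [hψ.1, hψ.2])
      (by linarith [Real.pi_pos])
      (by linarith [hψ.2])⟩

lemma tan_pi_div_four_add {η : ℝ} (hη : Real.cos η ≠ 0) :
    Real.tan (π / 4 + η) = (1 + Real.tan η) / (1 - Real.tan η) := by
  have hsqrt : √2 / 2 ≠ 0 := by positivity
  rw [Real.tan_eq_sin_div_cos, Real.tan_eq_sin_div_cos, Real.sin_add, Real.cos_add,
    Real.sin_pi_div_four, Real.cos_pi_div_four, ← mul_add, ← mul_sub, mul_div_mul_left _ _ hsqrt,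
    one_add_div hη, one_sub_div hη, div_div_div_cancel_right₀ hη, add_comm]

lemma minusRatio_eq (hψ : ψ ∈ Ioo 0 (π / 2)) :
    minusRatio ψ = 2 * Real.tan (ψ / 2) / (1 - Real.tan (ψ / 2)) := by
  have hcos : 0 < Real.cos (ψ / 2) :=
    Real.cos_pos_of_mem_Ioo ⟨by linarith [hψ.1, Real.pi_pos], by linarith [hψ.1, hψ.2]⟩
  have hne := (sub_pos.2 (tan_half_mem_Ioo hψ).2).ne'
  rw [minusRatio, tan_pi_div_four_add hcos.ne', div_sub_one hne]
  ring

lemma plusRatio_eq (hψ : ψ ∈ Ioo 0 (π / 2)) : plusRatio ψ = 2 / (1 + Real.tan (ψ / 2)) := by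
  have hcos : 0 < Real.cos (-(ψ / 2)) :=
    Real.cos_pos_of_mem_Ioo ⟨by linarith [hψ.1, hψ.2], by linarith [hψ.1, Real.pi_pos]⟩
  have hne := (add_pos one_pos (tan_half_mem_Ioo hψ).1).ne'
  rw [plusRatio, sub_eq_add_neg, tan_pi_div_four_add hcos.ne', Real.tan_neg, sub_neg_eq_add,
    div_add_one hne]
  ring

lemma minusRatio_mul_plusRatio (hψ : ψ ∈ Ioo 0 (π / 2)) :
    minusRatio ψ * plusRatio ψ = 2 * Real.tan ψ := by
  rw [minusRatio_eq hψ, plusRatio_eq hψ, ← mul_div_cancel₀ ψ (two_ne_zero' ℝ), Real.tan_two_mul,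
    mul_div_cancel₀ ψ (two_ne_zero' ℝ), div_mul_div_comm, mul_comm (1 - _), ← sq_sub_sq, one_pow]
  ring

lemma minusRatio_div_plusRatio (hψ : ψ ∈ Ioo 0 (π / 2)) :
    minusRatio ψ / plusRatio ψ = Real.tan (π / 4 + ψ / 2) * Real.tan (ψ / 2) := by
  have hcos : 0 < Real.cos (ψ / 2) :=
    Real.cos_pos_of_mem_Ioo ⟨by linarith [hψ.1, Real.pi_pos], by linarith [hψ.1, hψ.2]⟩
  rw [minusRatio_eq hψ, plusRatio_eq hψ, tan_pi_div_four_add hcos.ne', div_div_eq_mul_div]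
  ring

lemma logMulLogHalf_minusRatio_sub_plusRatio (hψ : ψ ∈ Ioo 0 (π / 2)) :
    logMulLogHalf (minusRatio ψ) - logMulLogHalf (plusRatio ψ) =
      (Real.log (Real.tan (π / 4 + ψ / 2)) + Real.log (Real.tan (ψ / 2))) *
        Real.log (Real.tan ψ) := by
  obtain ⟨htan₀, htan₁⟩ := tan_half_mem_Ioo hψ
  have hminus : minusRatio ψ ≠ 0 := by
    rw [minusRatio_eq hψ]
    exact (div_pos (by positivity) (sub_pos.2 htan₁)).ne'
  have hplus : plusRatio ψ ≠ 0 := by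
    rw [plusRatio_eq hψ]
    positivity
  have htan_ne : Real.tan (π / 4 + ψ / 2) ≠ 0 :=
    (Real.tan_pos_of_pos_of_lt_pi_div_two (by linarith [hψ.1, Real.pi_pos])
      (by linarith [hψ.2])).ne'
  have htan : Real.log (Real.tan ψ) =
      Real.log (minusRatio ψ) + Real.log (plusRatio ψ) - Real.log 2 := by
    rw [← Real.log_mul hminus hplus, minusRatio_mul_plusRatio hψ, Real.log_mul two_ne_zero
      (Real.tan_pos_of_pos_of_lt_pi_div_two hψ.1 hψ.2).ne', add_sub_cancel_left]
  rw [← Real.log_mul htan_ne htan₀.ne', ← minusRatio_div_plusRatio hψ, Real.log_div hminus hplus,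
    htan, logMulLogHalf, logMulLogHalf]
  ring

end Ratio

lemma hasIntervalIntegral_logMulLogHalf_ratio :
    HasIntervalIntegral
      (fun ψ => (logMulLogHalf (minusRatio ψ) - logMulLogHalf (plusRatio ψ)) / Real.cos ψ)
      0 (π / 4) (21 / 16 * aperyConst + π ^ 2 * Real.log 2 / 8) := by
  have hpi := Real.pi_pos
  have hrange : ∀ ψ ∈ Icc 0 (π / 4), ψ ∈ Ioo (-(π / 2)) (π / 2) := fun ψ hψ =>
    ⟨by linarith [hψ.1], by linarith [hψ.2]⟩
  have hcos : ∀ ψ ∈ Icc 0 (π / 4), 0 < Real.cos ψ := fun ψ hψ =>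
    Real.cos_pos_of_mem_Ioo (hrange ψ hψ)
  obtain ⟨T, U, hT, hU, hTU⟩ := exists_hasIntervalIntegral_logMulLogHalf_div
  have hminus : minusRatio 0 = 0 ∧ minusRatio (π / 4) = √2 :=
    ⟨by simp [minusRatio], by rw [← tan_three_pi_div_eight_sub_one, minusRatio]; ring_nf⟩
  have hplus : plusRatio 0 = 2 ∧ plusRatio (π / 4) = √2 :=
    ⟨by norm_num [plusRatio], by rw [← tan_pi_div_eight_add_one, plusRatio]; ring_nf⟩
  have hminusIntegral := (HasIntervalIntegral.comp_strictMono_iff (by positivity)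
    (fun ψ hψ => (hasDerivAt_minusRatio (hrange ψ hψ)).continuousAt.continuousWithinAt)
    (fun ψ hψ => hasDerivAt_minusRatio (hrange ψ (Ioo_subset_Icc_self hψ)))
    fun ψ hψ => div_pos (one_add_minusRatio_pos (hrange ψ (Ioo_subset_Icc_self hψ)))
      (hcos ψ (Ioo_subset_Icc_self hψ))).1 (by rwa [hminus.1, hminus.2])
  have hplusIntegral := (HasIntervalIntegral.comp_strictAnti_iff (by positivity)
    (fun ψ hψ => (hasDerivAt_plusRatio (hrange ψ hψ)).continuousAt.continuousWithinAt)
    (fun ψ hψ => hasDerivAt_plusRatio (hrange ψ (Ioo_subset_Icc_self hψ)))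
    fun ψ hψ => div_pos (plusRatio_sub_one_pos (hrange ψ (Ioo_subset_Icc_self hψ)))
      (hcos ψ (Ioo_subset_Icc_self hψ))).1 (by rwa [hplus.1, hplus.2])
  refine hTU ▸ (hminusIntegral.sub hplusIntegral).congr (by positivity) fun ψ hψ => ?_
  have hψ := hrange ψ (Ioo_subset_Icc_self hψ)
  have hminus_ne := (one_add_minusRatio_pos hψ).ne'
  have hplus_ne := (plusRatio_sub_one_pos hψ).ne'
  simp only [smul_eq_mul]
  field_simp

lemma hasIntervalIntegral_log_tan_add_mul_log_tan_div_cos :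
    HasIntervalIntegral (fun ψ => (Real.log (Real.tan (π / 4 + ψ / 2)) +
      Real.log (Real.tan (ψ / 2))) * Real.log (Real.tan ψ) / Real.cos ψ)
      0 (π / 4) (21 / 16 * aperyConst + π ^ 2 * Real.log 2 / 8) :=
  hasIntervalIntegral_logMulLogHalf_ratio.congr (by positivity) fun ψ hψ => by
    rw [logMulLogHalf_minusRatio_sub_plusRatio ⟨hψ.1, by linarith [hψ.2, Real.pi_pos]⟩]

/-! ### The integrand on the sector -/

/-- The analytic function whose value at `t p₁` is `-i Ω₃(t)`. -/
def rotatedOmega₃ (w : ℂ) : ℂ := -I * (logQuot (I * w) + logQuot w)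

/-- The function whose value at `t p₁` is `-i (Ω₁(1) - Ω₁(t))`. -/
def rotatedOmega₁ (w : ℂ) : ℂ := π / 2 + I * (logProd (I * w) - logProd w)

/-- The holomorphic integrand on the sector `0 ≤ arg w ≤ π / 4` whose integral along the ray
through `p₁` has real part `-i Ω_{3,3,2,1}`. -/
def sectorIntegrand (w : ℂ) : ℂ :=
  rotatedOmega₃ w ^ 2 * rotatedOmega₁ w * (-2 * I / (1 + w ^ 2))

section Tame

variable {b : ℝ}

lemma isLogTame_div_one_add_sq (hb : b < π / 2) (c : ℂ) :
    IsLogTame b fun w => c / (1 + w ^ 2) := by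
  have hne {w : ℂ} (hI : w ≠ I) (hnegI : w ≠ -I) : 1 + w ^ 2 ≠ 0 := fun h =>
    (sq_eq_sq_iff_eq_or_eq_neg.1 (by rw [Complex.I_sq]; linear_combination h)).elim hI hnegI
  refine IsLogTame.of_continuousOn (fun w hw => ?_) fun w hw => ?_
  · have hw : ‖w‖ < 1 := mem_ball_zero_iff.1 hw
    have hsq : 1 + w ^ 2 ≠ 0 := hne (by rintro rfl; simp at hw) (by rintro rfl; simp at hw)
    exact DifferentiableAt.differentiableWithinAt (by fun_prop (disch := exact hsq))
  · have hsq : 1 + w ^ 2 ≠ 0 := hne (fun h => I_notMem_unitSector hb (h ▸ hw))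
      fun h => neg_I_notMem_unitSector (by linarith [Real.pi_pos]) (h ▸ hw)
    exact ContinuousAt.continuousWithinAt (by fun_prop (disch := exact hsq))

lemma isLogTame_logQuot_I_mul (hb : b < π / 2) : IsLogTame b fun w => logQuot (I * w) :=
  (IsLogTame.log_one_add_I_mul hb).sub (IsLogTame.log_one_sub_I_mul (by linarith [Real.pi_pos]))

lemma isLogTame_logProd_I_mul (hb : b < π / 2) : IsLogTame b fun w => logProd (I * w) :=
  (IsLogTame.log_one_add_I_mul hb).add (IsLogTame.log_one_sub_I_mul (by linarith [Real.pi_pos]))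

lemma isLogTame_sectorIntegrand (hb : b < π / 2) : IsLogTame b sectorIntegrand := by
  have hπ : b < π := by linarith [Real.pi_pos]
  have hω₃ := (IsLogTame.const b (-I)).mul
    ((isLogTame_logQuot_I_mul hb).add (isLogTame_logQuot hπ))
  have hω₁ := (IsLogTame.const b (π / 2)).add ((IsLogTame.const b I).mul
    ((isLogTame_logProd_I_mul hb).sub (isLogTame_logProd hπ)))
  exact ((hω₃.pow 2).mul hω₁).mul (isLogTame_div_one_add_sq hb _)

end Tame

section Arc

variable {ψ : ℝ}

lemma I_mul_exp (ψ : ℝ) : I * exp (ψ * I) = exp ((π / 2 + ψ : ℝ) * I) := by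
  push_cast
  rw [add_mul, Complex.exp_add, Complex.exp_pi_div_two_mul_I]

lemma rotatedOmega₃_exp (hψ : ψ ∈ Ioo 0 (π / 2)) :
    rotatedOmega₃ (exp (ψ * I)) =
      ⟨π, Real.log (Real.tan (π / 4 + ψ / 2)) + Real.log (Real.tan (ψ / 2))⟩ := by
  rw [rotatedOmega₃, I_mul_exp, logQuot_exp ⟨by linarith [hψ.1, Real.pi_pos], by linarith [hψ.2]⟩,
    logQuot_exp (mem_Ioo_zero_pi_of_mem_Ioo hψ), show (π / 2 + ψ) / 2 = π / 4 + ψ / 2 by ring]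
  apply Complex.ext <;> simp [add_comm]

lemma rotatedOmega₁_exp (hψ : ψ ∈ Ioo 0 (π / 2)) :
    rotatedOmega₁ (exp (ψ * I)) = ⟨0, -Real.log (Real.tan ψ)⟩ := by
  have hsin := Real.sin_pos_of_pos_of_lt_pi hψ.1 (by linarith [hψ.1, hψ.2])
  have hcos := Real.cos_pos_of_mem_Ioo (x := ψ) ⟨by linarith [hψ.1, Real.pi_pos], hψ.2⟩
  rw [rotatedOmega₁, I_mul_exp, logProd_exp ⟨by linarith [hψ.1, Real.pi_pos], by linarith [hψ.2]⟩,
    logProd_exp (mem_Ioo_zero_pi_of_mem_Ioo hψ), add_comm (π / 2), Real.sin_add_pi_div_two,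
    Real.tan_eq_sin_div_cos, Real.log_div hsin.ne' hcos.ne', Real.log_mul two_ne_zero hsin.ne',
    Real.log_mul two_ne_zero hcos.ne']
  apply Complex.ext <;> simp

lemma exp_mul_div_one_add_exp_sq (ψ : ℝ) :
    exp (ψ * I) * (-2 * I / (1 + exp (ψ * I) ^ 2)) = -(I / Real.cos ψ) := by
  have hcos : 1 + exp (ψ * I) ^ 2 = exp (ψ * I) * (2 * Complex.cos ψ) := by
    rw [Complex.two_cos, mul_add, ← Complex.exp_add, ← Complex.exp_add, sq, ← Complex.exp_add]
    simp [add_comm]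
  rw [hcos, mul_div_assoc', mul_div_mul_left _ _ (Complex.exp_ne_zero _), Complex.ofReal_cos]
  ring

lemma re_I_mul_exp_mul_sectorIntegrand_exp (hψ : ψ ∈ Ioo 0 (π / 2)) :
    (I * (exp (ψ * I) * sectorIntegrand (exp (ψ * I)))).re =
      2 * π * ((Real.log (Real.tan (π / 4 + ψ / 2)) + Real.log (Real.tan (ψ / 2))) *
        Real.log (Real.tan ψ) / Real.cos ψ) := by
  have hfactor : I * (exp (ψ * I) * sectorIntegrand (exp (ψ * I))) =
      rotatedOmega₃ (exp (ψ * I)) ^ 2 * rotatedOmega₁ (exp (ψ * I)) *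
        ((Real.cos ψ)⁻¹ : ℝ) := by
    rw [sectorIntegrand, mul_left_comm (exp _), exp_mul_div_one_add_exp_sq, Complex.ofReal_inv]
    linear_combination -(rotatedOmega₃ (exp (ψ * I)) ^ 2 * rotatedOmega₁ (exp (ψ * I)) *
      (Real.cos ψ : ℂ)⁻¹) * Complex.I_sq
  rw [hfactor, Complex.re_mul_ofReal, rotatedOmega₃_exp hψ, rotatedOmega₁_exp hψ, sq]
  simp only [Complex.mul_re, Complex.mul_im]
  ring

end Arc

section Segment

lemma log_one_add_ofReal_mul_I (x : ℝ) :
    Complex.log (1 + x * I) = ⟨Real.log (1 + x ^ 2) / 2, Real.arctan x⟩ := by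
  refine Complex.ext ?_ ?_
  · rw [Complex.log_re, Complex.norm_def, Real.log_sqrt (Complex.normSq_nonneg _),
      Complex.normSq_apply]
    simp [sq]
  · rw [Complex.log_im]
    have harg : |(1 + x * I).arg| < π / 2 := Complex.abs_arg_lt_pi_div_two_iff.2 (by simp)
    exact (Real.arctan_eq_of_tan_eq (by simp [Complex.tan_arg]) (abs_lt.1 harg)).symm

lemma logQuot_I_mul_ofReal (x : ℝ) : logQuot (I * x) = ⟨0, 2 * Real.arctan x⟩ := by
  have hsub := log_one_add_ofReal_mul_I (-x)
  rw [Complex.ofReal_neg, neg_mul, ← sub_eq_add_neg, Real.arctan_neg, neg_sq] at hsub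
  rw [mul_comm, logQuot, log_one_add_ofReal_mul_I, hsub]
  apply Complex.ext <;> simp
  ring

lemma logProd_I_mul_ofReal (x : ℝ) : logProd (I * x) = ⟨Real.log (1 + x ^ 2), 0⟩ := by
  have hsub := log_one_add_ofReal_mul_I (-x)
  rw [Complex.ofReal_neg, neg_mul, ← sub_eq_add_neg, Real.arctan_neg, neg_sq] at hsub
  rw [mul_comm, logProd, log_one_add_ofReal_mul_I, hsub]
  apply Complex.ext <;> simp

variable {x : ℝ}

lemma log_tan_pi_div_four_sub_arctan (hx : x ∈ Ioo (0 : ℝ) 1) :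
    Real.log (Real.tan (π / 4 - Real.arctan x)) = Real.log (1 - x) - Real.log (1 + x) := by
  have hadd : 1 + x ≠ 0 := by linarith [hx.1]
  have hsub : 1 - x ≠ 0 := by linarith [hx.2]
  rw [← Real.log_div hsub hadd, sub_eq_add_neg, ← Real.arctan_neg,
    tan_pi_div_four_add (Real.cos_arctan_pos _).ne', Real.tan_arctan, sub_neg_eq_add,
    ← sub_eq_add_neg]

lemma log_sin_pi_div_two_sub_two_mul_arctan (hx : x ∈ Ioo (0 : ℝ) 1) :
    Real.log (Real.sin (π / 2 - 2 * Real.arctan x)) =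
      Real.log (1 + x) + Real.log (1 - x) - Real.log (1 + x ^ 2) := by
  have hadd : 1 + x ≠ 0 := by linarith [hx.1]
  have hsub : 1 - x ≠ 0 := by linarith [hx.2]
  have hsq : 1 + x ^ 2 ≠ 0 := by positivity
  rw [← Real.log_mul hadd hsub, ← Real.log_div (mul_ne_zero hadd hsub) hsq,
    Real.sin_pi_div_two_sub, Real.cos_two_mul, Real.cos_sq_arctan]
  congr 1
  field_simp
  ring

/-- The integrand on the real segment, after the substitution `α = π / 2 - 2 arctan x`. -/
def segmentIntegrand (α : ℝ) : ℝ :=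
  ((π / 2 - α) ^ 2 - Real.log (Real.tan (α / 2)) ^ 2) * Real.log (Real.sin α) -
    π * ((π / 2 - α) * Real.log (Real.tan (α / 2)))

lemma hasIntervalIntegral_segmentIntegrand :
    HasIntervalIntegral segmentIntegrand 0 (π / 2)
      (π ^ 3 * Real.log 2 / 12 + 13 / 4 * π * aperyConst) := by
  have hcombination := ((hasIntervalIntegral_sub_sq_mul_log_two_mul_sin.sub
    hasIntervalIntegral_log_tan_sq_mul_log_two_mul_sin).sub
    ((hasIntervalIntegral_pi_div_two_sub_sq.sub hasIntervalIntegral_log_tan_sq).const_mul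
      (Real.log 2))).sub (hasIntervalIntegral_sub_mul_log_tan.const_mul π)
  convert hcombination.congr Real.pi_div_two_pos.le fun α hα => ?_ using 1
  · ring
  have hsin := Real.sin_pos_of_pos_of_lt_pi hα.1 (by linarith [hα.1, hα.2])
  rw [segmentIntegrand, Real.log_mul two_ne_zero hsin.ne']
  ring

lemma re_sectorIntegrand_ofReal (hx : x ∈ Ioo (0 : ℝ) 1) :
    (sectorIntegrand x).re =
      -(2 / (1 + x ^ 2) * segmentIntegrand (π / 2 - 2 * Real.arctan x)) := by
  have hmem : x ∈ Icc (-1 : ℝ) 1 := ⟨by linarith [hx.1], hx.2.le⟩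
  have hω₃ : rotatedOmega₃ x =
      ⟨2 * Real.arctan x, Real.log (Real.tan (π / 4 - Real.arctan x))⟩ := by
    rw [rotatedOmega₃, logQuot_I_mul_ofReal, logQuot_ofReal hmem,
      log_tan_pi_div_four_sub_arctan hx]
    apply Complex.ext <;> simp
  have hω₁ : rotatedOmega₁ x =
      ⟨π / 2, -Real.log (Real.sin (π / 2 - 2 * Real.arctan x))⟩ := by
    rw [rotatedOmega₁, logProd_I_mul_ofReal, logProd_ofReal hmem,
      log_sin_pi_div_two_sub_two_mul_arctan hx]
    apply Complex.ext <;> simp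
  have hkernel : -2 * I / (1 + (x : ℂ) ^ 2) = (2 / (1 + x ^ 2) : ℝ) * -I := by
    push_cast
    ring
  rw [sectorIntegrand, segmentIntegrand, hω₃, hω₁, hkernel, sq,
    show (π / 2 - 2 * Real.arctan x) / 2 = π / 4 - Real.arctan x by ring]
  simp only [Complex.mul_re, Complex.mul_im, Complex.ofReal_re, Complex.ofReal_im, Complex.I_re,
    Complex.I_im, Complex.neg_re, Complex.neg_im]
  ring

lemma hasIntervalIntegral_re_sectorIntegrand_ofReal :
    HasIntervalIntegral (fun x : ℝ => (sectorIntegrand x).re) 0 1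
      (-(π ^ 3 * Real.log 2 / 12 + 13 / 4 * π * aperyConst)) := by
  have hderiv (x : ℝ) :
      HasDerivAt (fun x => π / 2 - 2 * Real.arctan x) (-(2 / (1 + x ^ 2))) x :=
    (((Real.hasDerivAt_arctan x).const_mul 2).const_sub (π / 2)).congr_deriv (by ring)
  have hsubst := (HasIntervalIntegral.comp_strictAnti_iff (f := segmentIntegrand) zero_le_one
    (fun x _ => (hderiv x).continuousAt.continuousWithinAt) (fun x _ => hderiv x)
    fun x _ => by positivity).1 (by
      convert hasIntervalIntegral_segmentIntegrand using 1
      · rw [Real.arctan_one]; ring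
      · simp)
  rw [← neg_one_mul]
  refine (hsubst.const_mul (-1)).congr zero_le_one fun x hx => ?_
  rw [re_sectorIntegrand_ofReal hx, smul_eq_mul, neg_one_mul]

end Segment

lemma hasIntervalIntegral_re_sectorIntegrand_ray :
    HasIntervalIntegral
      (fun x : ℝ => (exp ((π / 4 : ℝ) * I) * sectorIntegrand (x * exp ((π / 4 : ℝ) * I))).re) 0 1
      (π ^ 3 * Real.log 2 / 6 - 5 / 8 * π * aperyConst) := by
  have htame : IsLogTame (π / 4) sectorIntegrand :=
    isLogTame_sectorIntegrand (by linarith [Real.pi_pos])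
  have hmem : π / 4 ∈ Icc 0 (π / 2) := ⟨by positivity, by linarith [Real.pi_pos]⟩
  have hreal : (∫ x in (0 : ℝ)..1, sectorIntegrand x).re =
      -(π ^ 3 * Real.log 2 / 12 + 13 / 4 * π * aperyConst) :=
    (HasIntervalIntegral.re ⟨htame.intervalIntegrable_real hmem.1, rfl⟩).2.symm.trans
      hasIntervalIntegral_re_sectorIntegrand_ofReal.2
  have harc := (HasIntervalIntegral.const_mul I
    ⟨((IsLogTame.id _).mul htame).intervalIntegrable_arc hmem, rfl⟩).re.2
  have harcValue := ((hasIntervalIntegral_log_tan_add_mul_log_tan_div_cos.const_mul (2 * π)).congr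
    hmem.1 fun ψ hψ => (re_I_mul_exp_mul_sectorIntegrand_exp
      ⟨hψ.1, by linarith [hψ.2, Real.pi_pos]⟩).symm).2
  convert (htame.hasIntervalIntegral_ray hmem).re using 1
  rw [Complex.add_re, hreal, ← harc, harcValue]
  ring

/-! ### Iterated integrals -/

lemma Omega_append_singleton (fs : List (ℂ → ℂ)) (f : ℂ → ℂ) :
    Omega (fs ++ [f]) = fun z => ∫ t in (0 : ℝ)..z, Omega fs t * f t := by
  simp [Omega]

lemma continuous_Omega {fs : List (ℂ → ℂ)} (hfs : ∀ f ∈ fs, Continuous fun t : ℝ => f t) :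
    Continuous (Omega fs) := by
  induction fs using List.reverseRecOn with
  | nil => exact continuous_const
  | append_singleton fs f ih =>
    have hΩ := ih fun g hg => hfs g (by simp [hg])
    have hf := hfs f (by simp)
    rw [Omega_append_singleton]
    exact intervalIntegral.continuous_primitive
      (fun a b => (hΩ.mul hf).intervalIntegrable a b) 0

lemma hasDerivAt_Omega_append_singleton {fs : List (ℂ → ℂ)} {f : ℂ → ℂ}
    (hfs : ∀ g ∈ fs, Continuous fun t : ℝ => g t) (hf : Continuous fun t : ℝ => f t) (z : ℝ) :
    HasDerivAt (Omega (fs ++ [f])) (Omega fs z * f z) z := by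
  rw [Omega_append_singleton]
  exact (((continuous_Omega hfs).mul hf).integral_hasStrictDerivAt 0 z).hasDerivAt

lemma hasDerivAt_Omega_singleton {f : ℂ → ℂ} (hf : Continuous fun t : ℝ => f t) (z : ℝ) :
    HasDerivAt (Omega [f]) (f z) z :=
  (hasDerivAt_Omega_append_singleton (fs := []) (by simp) hf z).congr_deriv (one_mul _)

lemma Omega_singleton_eq_sub {f : ℂ → ℂ} {S : ℝ → ℂ} (hf : Continuous fun t : ℝ => f t) {z : ℝ}
    (hS : ∀ t ∈ uIcc 0 z, HasDerivAt S (f t) t) : Omega [f] z = S z - S 0 := by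
  rw [← intervalIntegral.integral_eq_sub_of_hasDerivAt hS (hf.intervalIntegrable 0 z)]
  simp [Omega]

lemma Omega_pair_self {f : ℂ → ℂ} (hf : Continuous fun t : ℝ => f t) (z : ℝ) :
    Omega [f, f] z = Omega [f] z ^ 2 / 2 := by
  have hderiv (t : ℝ) : HasDerivAt (fun t => Omega [f] t ^ 2 / 2) (Omega [f] t * f t) t :=
    (((hasDerivAt_Omega_singleton hf t).pow 2).div_const 2).congr_deriv (by simp; ring)
  have hΩ : Continuous (Omega [f]) := continuous_Omega (by simpa using hf)
  calc Omega [f, f] z = ∫ t in (0 : ℝ)..z, Omega [f] t * f t := rfl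
    _ = Omega [f] z ^ 2 / 2 - Omega [f] 0 ^ 2 / 2 :=
      intervalIntegral.integral_eq_sub_of_hasDerivAt (fun t _ => hderiv t)
        ((hΩ.mul hf).intervalIntegrable 0 z)
    _ = Omega [f] z ^ 2 / 2 := by simp [Omega]

lemma Omega_append_pair {fs : List (ℂ → ℂ)} {g h : ℂ → ℂ}
    (hfs : ∀ f ∈ fs, Continuous fun t : ℝ => f t) (hg : Continuous fun t : ℝ => g t)
    (hh : Continuous fun t : ℝ => h t) (z : ℝ) :
    Omega (fs ++ [g] ++ [h]) z =
      ∫ t in (0 : ℝ)..z, Omega fs t * g t * (Omega [h] z - Omega [h] t) := by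
  have hparts := intervalIntegral.integral_mul_deriv_eq_deriv_mul (a := 0) (b := z)
    (fun t _ => hasDerivAt_Omega_append_singleton hfs hg t)
    (fun t _ => (hasDerivAt_Omega_singleton hh t).sub_const (Omega [h] z))
    (((continuous_Omega hfs).mul hg).intervalIntegrable 0 z) (hh.intervalIntegrable 0 z)
  have hzero : Omega (fs ++ [g]) 0 = 0 := by simp [Omega_append_singleton]
  rw [Omega_append_singleton]
  dsimp only
  rw [hparts, sub_self, mul_zero, hzero, zero_mul, sub_zero, zero_sub,
    ← intervalIntegral.integral_neg]
  exact intervalIntegral.integral_congr fun t _ => by ring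

/-! ### The forms `F₁`, `F₂`, `F₃` on the ray through `p₁` -/

lemma p₁_eq_exp : p₁ = exp ((π / 4 : ℝ) * I) := by
  rw [p₁, mul_comm]
  push_cast
  rfl

lemma p₁_sq : p₁ ^ 2 = I := by
  have hexponent : (2 : ℕ) * (I * (π / 4)) = π / 2 * I := by
    push_cast
    ring
  rw [p₁, ← Complex.exp_nat_mul, hexponent, Complex.exp_pi_div_two_mul_I]

lemma conj_p₁ : conj p₁ = -(I * p₁) := by
  have hnorm : conj p₁ * p₁ = 1 := by
    rw [mul_comm, Complex.mul_conj, Complex.normSq_eq_norm_sq, p₁_eq_exp,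
      Complex.norm_exp_ofReal_mul_I]
    simp
  have hne : p₁ ≠ 0 := Complex.exp_ne_zero _
  apply mul_right_cancel₀ hne
  linear_combination hnorm + I * p₁_sq + Complex.I_sq

lemma p₂_eq : p₂ = I * p₁ := by
  have hconj : p₂ = -conj p₁ := by
    rw [p₁, p₂, ← Complex.exp_conj]
    simp [Complex.conj_ofNat]
  rw [hconj, conj_p₁, neg_neg]

lemma p₁_re : p₁.re = √2 / 2 := by
  rw [p₁_eq_exp, Complex.exp_ofReal_mul_I_re, Real.cos_pi_div_four]

lemma p₁_im : p₁.im = √2 / 2 := by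
  rw [p₁_eq_exp, Complex.exp_ofReal_mul_I_im, Real.sin_pi_div_four]

lemma one_add_ofReal_mul_p₁_sq_ne_zero (t : ℝ) : 1 + (t * p₁) ^ 2 ≠ 0 := fun h => by
  have hre := congrArg Complex.re h
  rw [mul_pow, p₁_sq, ← Complex.ofReal_pow, Complex.add_re, Complex.re_ofReal_mul] at hre
  simp at hre

lemma one_sub_ofReal_mul_p₁_sq_ne_zero (t : ℝ) : 1 - (t * p₁) ^ 2 ≠ 0 := fun h => by
  have hre := congrArg Complex.re h
  rw [mul_pow, p₁_sq, ← Complex.ofReal_pow, Complex.sub_re, Complex.re_ofReal_mul] at hre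
  simp at hre

lemma ofReal_sub_p₁_mul_ofReal_sub_p₃ (t : ℝ) :
    (t - p₁) * (t - p₃) = -I * (1 + (t * p₁) ^ 2) := by
  rw [p₃]
  linear_combination (t ^ 2 * I - 1) * p₁_sq + (t : ℂ) ^ 2 * Complex.I_sq

lemma ofReal_sub_p₂_mul_ofReal_sub_p₄ (t : ℝ) :
    (t - p₂) * (t - p₄) = I * (1 - (t * p₁) ^ 2) := by
  rw [p₄, p₂_eq]
  linear_combination (t ^ 2 * I - I ^ 2) * p₁_sq + ((t : ℂ) ^ 2 - I) * Complex.I_sq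

lemma ofReal_sub_pole_ne_zero (t : ℝ) :
    ((t : ℂ) - p₁ ≠ 0 ∧ (t : ℂ) - p₃ ≠ 0) ∧ (t : ℂ) - p₂ ≠ 0 ∧ (t : ℂ) - p₄ ≠ 0 := by
  rw [← mul_ne_zero_iff, ← mul_ne_zero_iff, ofReal_sub_p₁_mul_ofReal_sub_p₃,
    ofReal_sub_p₂_mul_ofReal_sub_p₄]
  exact ⟨mul_ne_zero (neg_ne_zero.2 Complex.I_ne_zero) (one_add_ofReal_mul_p₁_sq_ne_zero t),
    mul_ne_zero Complex.I_ne_zero (one_sub_ofReal_mul_p₁_sq_ne_zero t)⟩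

lemma one_div_sub_p₁_sub_one_div_sub_p₃ (t : ℝ) :
    1 / (t - p₁) - 1 / (t - p₃) = 2 * I * p₁ / (1 + (t * p₁) ^ 2) := by
  obtain ⟨⟨h₁, h₃⟩, -⟩ := ofReal_sub_pole_ne_zero t
  rw [div_sub_div _ _ h₁ h₃, ofReal_sub_p₁_mul_ofReal_sub_p₃, ← div_div, div_neg, Complex.div_I, p₃]
  ring

lemma one_div_sub_p₁_add_one_div_sub_p₃ (t : ℝ) :
    1 / (t - p₁) + 1 / (t - p₃) = 2 * I * t / (1 + (t * p₁) ^ 2) := by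
  obtain ⟨⟨h₁, h₃⟩, -⟩ := ofReal_sub_pole_ne_zero t
  rw [div_add_div _ _ h₁ h₃, ofReal_sub_p₁_mul_ofReal_sub_p₃, ← div_div, div_neg, Complex.div_I, p₃]
  ring

lemma one_div_sub_p₂_sub_one_div_sub_p₄ (t : ℝ) :
    1 / (t - p₂) - 1 / (t - p₄) = 2 * p₁ / (1 - (t * p₁) ^ 2) := by
  obtain ⟨-, h₂, h₄⟩ := ofReal_sub_pole_ne_zero t
  rw [div_sub_div _ _ h₂ h₄, ofReal_sub_p₂_mul_ofReal_sub_p₄, ← div_div, Complex.div_I, p₄, p₂_eq]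
  linear_combination -(2 * p₁ / (1 - (t * p₁) ^ 2)) * Complex.I_sq

lemma one_div_sub_p₂_add_one_div_sub_p₄ (t : ℝ) :
    1 / (t - p₂) + 1 / (t - p₄) = -(2 * I * t / (1 - (t * p₁) ^ 2)) := by
  obtain ⟨-, h₂, h₄⟩ := ofReal_sub_pole_ne_zero t
  rw [div_add_div _ _ h₂ h₄, ofReal_sub_p₂_mul_ofReal_sub_p₄, ← div_div, Complex.div_I, p₄]
  ring

lemma F₁_ofReal (t : ℝ) :
    F₁ t = 2 * I * t / (1 + (t * p₁) ^ 2) + 2 * I * t / (1 - (t * p₁) ^ 2) := by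
  rw [F₁]
  linear_combination one_div_sub_p₁_add_one_div_sub_p₃ t - one_div_sub_p₂_add_one_div_sub_p₄ t

lemma F₂_ofReal (t : ℝ) :
    F₂ t = 2 * I * p₁ / (1 + (t * p₁) ^ 2) - 2 * p₁ / (1 - (t * p₁) ^ 2) := by
  rw [F₂]
  linear_combination one_div_sub_p₁_sub_one_div_sub_p₃ t - one_div_sub_p₂_sub_one_div_sub_p₄ t

lemma F₃_ofReal (t : ℝ) :
    F₃ t = 2 * I * p₁ / (1 + (t * p₁) ^ 2) + 2 * p₁ / (1 - (t * p₁) ^ 2) := by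
  rw [F₃]
  linear_combination one_div_sub_p₁_sub_one_div_sub_p₃ t + one_div_sub_p₂_sub_one_div_sub_p₄ t

lemma continuous_F₁_ofReal : Continuous fun t : ℝ => F₁ t := by
  simp only [F₁_ofReal]
  exact .add (.div (by fun_prop) (by fun_prop) one_add_ofReal_mul_p₁_sq_ne_zero)
    (.div (by fun_prop) (by fun_prop) one_sub_ofReal_mul_p₁_sq_ne_zero)

lemma continuous_F₂_ofReal : Continuous fun t : ℝ => F₂ t := by
  simp only [F₂_ofReal]
  exact .sub (.div (by fun_prop) (by fun_prop) one_add_ofReal_mul_p₁_sq_ne_zero)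
    (.div (by fun_prop) (by fun_prop) one_sub_ofReal_mul_p₁_sq_ne_zero)

lemma continuous_F₃_ofReal : Continuous fun t : ℝ => F₃ t := by
  simp only [F₃_ofReal]
  exact .add (.div (by fun_prop) (by fun_prop) one_add_ofReal_mul_p₁_sq_ne_zero)
    (.div (by fun_prop) (by fun_prop) one_sub_ofReal_mul_p₁_sq_ne_zero)

section Square

variable {w : ℂ}

lemma hasDerivAt_rotatedOmega₃ (hre : |w.re| < 1) (him : |w.im| < 1) :
    HasDerivAt rotatedOmega₃ (-I * (2 * I / (1 + w ^ 2) + 2 / (1 - w ^ 2))) w := by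
  have hquot := (hasDerivAt_logQuot (z := I * w) (by simpa using him)).comp w
    (hasDerivAt_const_mul I)
  refine ((hquot.add (hasDerivAt_logQuot hre)).const_mul (-I)).congr_deriv ?_
  rw [mul_pow, Complex.I_sq]
  ring

lemma hasDerivAt_rotatedOmega₁ (hre : |w.re| < 1) (him : |w.im| < 1) :
    HasDerivAt rotatedOmega₁ (I * (2 * w / (1 + w ^ 2) + 2 * w / (1 - w ^ 2))) w := by
  have hprod := (hasDerivAt_logProd (z := I * w) (by simpa using him)).comp w
    (hasDerivAt_const_mul I)
  refine (((hprod.sub (hasDerivAt_logProd hre)).const_mul I).const_add (π / 2 : ℂ)).congr_deriv ?_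
  rw [mul_pow, Complex.I_sq]
  linear_combination -(2 * I * w / (1 + w ^ 2)) * Complex.I_sq

lemma conj_rotatedOmega₃ (hre : |w.re| < 1) (him : |w.im| < 1) (hw : conj w = -(I * w)) :
    conj (rotatedOmega₃ w) = rotatedOmega₃ w := by
  have hIw : conj (I * w) = -w := by
    rw [map_mul, hw, Complex.conj_I]
    linear_combination w * Complex.I_sq
  rw [rotatedOmega₃, map_mul, map_add, map_neg, Complex.conj_I, ← logQuot_conj hre,
    ← logQuot_conj (by simpa using him), hIw, hw, logQuot_neg, logQuot_neg]
  ring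

lemma conj_rotatedOmega₁ (hre : |w.re| < 1) (him : |w.im| < 1) (hw : conj w = -(I * w)) :
    conj (rotatedOmega₁ w) = rotatedOmega₁ w := by
  have hIw : conj (I * w) = -w := by
    rw [map_mul, hw, Complex.conj_I]
    linear_combination w * Complex.I_sq
  rw [rotatedOmega₁, map_add, map_mul, map_sub, Complex.conj_I, ← logProd_conj hre,
    ← logProd_conj (by simpa using him), hIw, hw, logProd_neg, logProd_neg, map_div₀,
    Complex.conj_ofReal, Complex.conj_ofNat]
  ring

end Square

section Ray

variable {t : ℝ}

lemma abs_re_ofReal_mul_p₁_lt_one (ht : t ∈ Icc (0 : ℝ) 1) : |(t * p₁).re| < 1 := by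
  rw [Complex.re_ofReal_mul, p₁_re, abs_of_nonneg (mul_nonneg ht.1 (by positivity))]
  have hsqrt : √2 < 2 := (Real.sqrt_lt' two_pos).2 (by norm_num)
  exact (mul_le_of_le_one_left (by positivity) ht.2).trans_lt (by linarith)

lemma abs_im_ofReal_mul_p₁_lt_one (ht : t ∈ Icc (0 : ℝ) 1) : |(t * p₁).im| < 1 := by
  rw [Complex.im_ofReal_mul, p₁_im, ← p₁_re, ← Complex.re_ofReal_mul]
  exact abs_re_ofReal_mul_p₁_lt_one ht

lemma conj_ofReal_mul_p₁ (t : ℝ) : conj (t * p₁) = -(I * (t * p₁)) := by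
  rw [map_mul, Complex.conj_ofReal, conj_p₁]
  ring

lemma Omega_F₃ (ht : t ∈ Icc (0 : ℝ) 1) : Omega [F₃] t = I * rotatedOmega₃ (t * p₁) := by
  have hzero : rotatedOmega₃ 0 = 0 := by simp [rotatedOmega₃, logQuot_zero]
  rw [Omega_singleton_eq_sub (S := fun t : ℝ => I * rotatedOmega₃ (t * p₁)) continuous_F₃_ofReal]
  · simp [hzero]
  intro s hs
  rw [uIcc_of_le ht.1] at hs
  have hs : s ∈ Icc (0 : ℝ) 1 := ⟨hs.1, hs.2.trans ht.2⟩
  have hΩ := (hasDerivAt_rotatedOmega₃ (abs_re_ofReal_mul_p₁_lt_one hs)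
    (abs_im_ofReal_mul_p₁_lt_one hs)).comp (s : ℂ) (h := fun z => z * p₁) (hasDerivAt_mul_const p₁)
  refine (hΩ.const_mul I).comp_ofReal.congr_deriv ?_
  rw [F₃_ofReal]
  linear_combination -(2 * I * p₁ / (1 + (s * p₁) ^ 2) + 2 * p₁ / (1 - (s * p₁) ^ 2)) *
    Complex.I_sq

lemma rotatedOmega₁_p₁ : rotatedOmega₁ p₁ = 0 := by
  rw [p₁_eq_exp, rotatedOmega₁_exp ⟨by positivity, by linarith [Real.pi_pos]⟩,
    Real.tan_pi_div_four, Real.log_one, neg_zero]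
  rfl

lemma Omega_F₁_one_sub (ht : t ∈ Icc (0 : ℝ) 1) :
    Omega [F₁] 1 - Omega [F₁] t = I * rotatedOmega₁ (t * p₁) := by
  have hprimitive {z : ℝ} (hz : z ∈ Icc (0 : ℝ) 1) :
      Omega [F₁] z = -I * rotatedOmega₁ (z * p₁) - -I * rotatedOmega₁ ((0 : ℝ) * p₁) := by
    refine Omega_singleton_eq_sub (S := fun t : ℝ => -I * rotatedOmega₁ (t * p₁))
      continuous_F₁_ofReal fun s hs => ?_
    rw [uIcc_of_le hz.1] at hs
    have hs : s ∈ Icc (0 : ℝ) 1 := ⟨hs.1, hs.2.trans hz.2⟩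
    have hΩ := (hasDerivAt_rotatedOmega₁ (abs_re_ofReal_mul_p₁_lt_one hs)
      (abs_im_ofReal_mul_p₁_lt_one hs)).comp (s : ℂ) (h := fun z => z * p₁)
        (hasDerivAt_mul_const p₁)
    refine (hΩ.const_mul (-I)).comp_ofReal.congr_deriv ?_
    rw [F₁_ofReal]
    linear_combination
      (2 * s / (1 + (s * p₁) ^ 2) + 2 * s / (1 - (s * p₁) ^ 2)) * (p₁_sq - p₁ ^ 2 * Complex.I_sq)
  rw [hprimitive (right_mem_Icc.2 zero_le_one), hprimitive ht, Complex.ofReal_one, one_mul,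
    rotatedOmega₁_p₁]
  ring

lemma neg_F₂_ofReal (t : ℝ) :
    -F₂ t = 2 * (p₁ * (-2 * I / (1 + (t * p₁) ^ 2))).re := by
  have hconj : conj (p₁ * (-2 * I / (1 + (t * p₁) ^ 2))) = 2 * p₁ / (1 - (t * p₁) ^ 2) := by
    have hden : conj (1 + (t * p₁) ^ 2) = 1 - (t * p₁) ^ 2 := by
      rw [map_add, map_one, map_pow, conj_ofReal_mul_p₁]
      linear_combination (t * p₁) ^ 2 * Complex.I_sq
    rw [map_mul, map_div₀, hden, map_mul, map_neg, Complex.conj_I, Complex.conj_ofNat, conj_p₁]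
    linear_combination -(2 * p₁ / (1 - (t * p₁) ^ 2)) * Complex.I_sq
  rw [Complex.re_eq_add_conj, hconj, F₂_ofReal]
  ring

lemma Omega_integrand_eq (ht : t ∈ Icc (0 : ℝ) 1) :
    Omega [F₃, F₃] t * F₂ t * (Omega [F₁] 1 - Omega [F₁] t) =
      I * (p₁ * sectorIntegrand (t * p₁)).re := by
  have hre := abs_re_ofReal_mul_p₁_lt_one ht
  have him := abs_im_ofReal_mul_p₁_lt_one ht
  have hconj := conj_ofReal_mul_p₁ t
  obtain ⟨ω₃, hω₃⟩ := Complex.conj_eq_iff_real.1 (conj_rotatedOmega₃ hre him hconj)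
  obtain ⟨ω₁, hω₁⟩ := Complex.conj_eq_iff_real.1 (conj_rotatedOmega₁ hre him hconj)
  have hreal : (p₁ * sectorIntegrand (t * p₁)).re =
      ω₃ ^ 2 * ω₁ * (p₁ * (-2 * I / (1 + (t * p₁) ^ 2))).re := by
    rw [sectorIntegrand, hω₃, hω₁, mul_left_comm, ← Complex.ofReal_pow, ← Complex.ofReal_mul,
      Complex.re_ofReal_mul]
  rw [Omega_pair_self continuous_F₃_ofReal, Omega_F₃ ht, Omega_F₁_one_sub ht, hω₃, hω₁, hreal]
  push_cast
  linear_combination -(I ^ 3 * ω₃ ^ 2 * ω₁ / 2) * neg_F₂_ofReal t -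
    I * ω₃ ^ 2 * ω₁ * (p₁ * (-2 * I / (1 + (t * p₁) ^ 2))).re * Complex.I_sq

end Ray

lemma Omega_F₃_F₃_F₂_F₁ :
    Omega [F₃, F₃, F₂, F₁] 1 =
      I * (π ^ 3 * Real.log 2 / 6 - 5 / 8 * π * aperyConst : ℝ) := by
  rw [← hasIntervalIntegral_re_sectorIntegrand_ray.2, ← intervalIntegral.integral_ofReal,
    ← intervalIntegral.integral_const_mul, ← p₁_eq_exp]
  refine (Omega_append_pair (fs := [F₃, F₃]) (by simpa using continuous_F₃_ofReal)
    continuous_F₂_ofReal continuous_F₁_ofReal 1).trans ?_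
  refine intervalIntegral.integral_congr fun t ht => ?_
  exact Omega_integrand_eq (by rwa [uIcc_of_le zero_le_one] at ht)

/- STATEMENT 17: `Ω_{3,3,2,1} = (iπ³/6) log 2 - (5/8) iπ ζ(3)`. -/
theorem stmt_17 :
    Omega [F₃, F₃, F₂, F₁] 1 =
      Complex.I * (Real.pi : ℂ) ^ 3 / 6 * ((Real.log 2 : ℝ) : ℂ) -
        (5 / 8 : ℂ) * Complex.I * (Real.pi : ℂ) * riemannZeta 3 := by
  rw [Omega_F₃_F₃_F₂_F₁, riemannZeta_three]
  push_cast
  ring
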